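/- arXiv:1604.06329 — 5 statements merged into one kernel-verified Lean document; each statement's English description precedes it below -/
import Mathlib

section
/- Let (X, I, q, g) be a deterministic commutative MDP such that for every x ∈ X the MDP starting at x has a uniform value in pure strategies v*(x). Then for every initial state x₁ ∈ X there exists a 0-optimal (mixed) strategy: a Borel probability measure μ on I^ℕ (with the product topology, I discrete) such that lim_{n→∞} ∫_{I^ℕ} γ_n(x₁, a) dμ(a) = v*(x₁). -/
open Filter MeasureTheory Topology

noncomputable section

/-- The play induced by an initial state `x₁` and a pure strategy `a` in a deterministic MDP:
`x₀ = x₁` and `x_{t+1} = q (x_t) (a t)`. -/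
def play {X I : Type*} (q : X → I → X) (x₁ : X) (a : ℕ → I) : ℕ → X
  | 0 => x₁
  | t + 1 => q (play q x₁ a t) (a t)

/-- The `n`-stage average payoff `γ_n(x₁, a)`. -/
def payoff {X I : Type*} (q : X → I → X) (g : X → I → ℝ) (x₁ : X) (a : ℕ → I) (n : ℕ) : ℝ :=
  (1 / (n : ℝ)) * ∑ t ∈ Finset.range n, g (play q x₁ a t) (a t)

/-- The `n`-stage value `v_n(x₁)`. -/
def nValue {X I : Type*} (q : X → I → X) (g : X → I → ℝ) (x₁ : X) (n : ℕ) : ℝ :=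
  ⨆ a : ℕ → I, payoff q g x₁ a n

/-- The MDP starting at `x₁` has a uniform value `v` in pure strategies. -/
def HasUniformValuePure {X I : Type*} (q : X → I → X) (g : X → I → ℝ) (x₁ : X) (v : ℝ) : Prop :=
  (∀ ε > (0 : ℝ), ∃ a : ℕ → I, v - ε ≤ liminf (fun n => payoff q g x₁ a n) atTop) ∧
    limsup (fun n => nValue q g x₁ n) atTop ≤ v


section Aux

variable {X I : Type*} {q : X → I → X} {g : X → I → ℝ}

/-- total payoff over n stages -/
def total (q : X → I → X) (g : X → I → ℝ) (x : X) (a : ℕ → I) (n : ℕ) : ℝ :=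
  ∑ t ∈ Finset.range n, g (play q x a t) (a t)

lemma payoff_eq (x : X) (a : ℕ → I) (n : ℕ) : payoff q g x a n = total q g x a n / n := by
  unfold payoff total; ring

lemma total_nonneg (hg : ∀ x i, g x i ∈ Set.Icc (0 : ℝ) 1) (x : X) (a : ℕ → I) (n : ℕ) :
    0 ≤ total q g x a n := Finset.sum_nonneg fun _ _ => (hg _ _).1

lemma total_le (hg : ∀ x i, g x i ∈ Set.Icc (0 : ℝ) 1) (x : X) (a : ℕ → I) (n : ℕ) :
    total q g x a n ≤ n := by
  unfold total
  calc _ ≤ ∑ t ∈ Finset.range n, (1 : ℝ) := Finset.sum_le_sum fun _ _ => (hg _ _).2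
    _ = n := by simp

lemma payoff_nonneg (hg : ∀ x i, g x i ∈ Set.Icc (0 : ℝ) 1) (x : X) (a : ℕ → I) (n : ℕ) :
    0 ≤ payoff q g x a n := by
  rw [payoff_eq]; exact div_nonneg (total_nonneg hg _ _ _) (by positivity)

lemma payoff_le_one (hg : ∀ x i, g x i ∈ Set.Icc (0 : ℝ) 1) (x : X) (a : ℕ → I) (n : ℕ) :
    payoff q g x a n ≤ 1 := by
  rw [payoff_eq]; exact div_le_one_of_le₀ (total_le hg _ _ _) (by positivity)

lemma bdd_payoff (hg : ∀ x i, g x i ∈ Set.Icc (0 : ℝ) 1) (x : X) (n : ℕ) :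
    BddAbove (Set.range fun a => payoff q g x a n) :=
  ⟨1, by rintro _ ⟨a, rfl⟩; exact payoff_le_one hg _ _ _⟩

lemma payoff_le_nValue (hg : ∀ x i, g x i ∈ Set.Icc (0 : ℝ) 1) (x : X) (a : ℕ → I) (n : ℕ) :
    payoff q g x a n ≤ nValue q g x n := le_ciSup (bdd_payoff hg x n) a

lemma nValue_le_one [Nonempty I] (hg : ∀ x i, g x i ∈ Set.Icc (0 : ℝ) 1) (x : X) (n : ℕ) :
    nValue q g x n ≤ 1 := ciSup_le fun a => payoff_le_one hg _ _ _

lemma nValue_nonneg [Nonempty I] (hg : ∀ x i, g x i ∈ Set.Icc (0 : ℝ) 1) (x : X) (n : ℕ) :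
    0 ≤ nValue q g x n :=
  (payoff_nonneg hg x (fun _ => Classical.arbitrary I) n).trans (payoff_le_nValue hg _ _ _)

lemma exists_opt (hg : ∀ x i, g x i ∈ Set.Icc (0 : ℝ) 1) {x : X} {V : ℝ}
    (h : HasUniformValuePure q g x V) {ε : ℝ} (hε : 0 < ε) :
    ∃ a : ℕ → I, ∀ᶠ n in atTop, V - ε ≤ payoff q g x a n := by
  obtain ⟨a, ha⟩ := h.1 (ε / 2) (by linarith)
  refine ⟨a, ?_⟩
  have h1 : V - ε < liminf (fun n => payoff q g x a n) atTop := by linarith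
  have hb : IsBoundedUnder (· ≥ ·) atTop (fun n => payoff q g x a n) :=
    isBoundedUnder_of ⟨0, fun n => payoff_nonneg hg x a n⟩
  exact (eventually_lt_of_lt_liminf h1 hb).mono fun n hn => hn.le

lemma eventually_nValue [Nonempty I] (hg : ∀ x i, g x i ∈ Set.Icc (0 : ℝ) 1) {x : X} {V : ℝ}
    (h : HasUniformValuePure q g x V) {c : ℝ} (hc : V < c) :
    ∀ᶠ n in atTop, nValue q g x n < c := by
  have hb : IsBoundedUnder (· ≤ ·) atTop (fun n => nValue q g x n) :=
    isBoundedUnder_of ⟨1, fun n => nValue_le_one hg x n⟩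
  exact eventually_lt_of_limsup_lt (h.2.trans_lt hc) hb

lemma le_value [Nonempty I] (hg : ∀ x i, g x i ∈ Set.Icc (0 : ℝ) 1) {x : X} {V : ℝ}
    (h : HasUniformValuePure q g x V) {c : ℝ} {a : ℕ → I}
    (ha : ∀ᶠ n in atTop, c ≤ payoff q g x a n) : c ≤ V := by
  by_contra! hlt
  obtain ⟨n, h1, h2⟩ := (ha.and (eventually_nValue hg h hlt)).exists
  linarith [payoff_le_nValue (q := q) hg x a n]

lemma value_le_one [Nonempty I] (hg : ∀ x i, g x i ∈ Set.Icc (0 : ℝ) 1) {x : X} {V : ℝ}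
    (h : HasUniformValuePure q g x V) : V ≤ 1 := by
  refine le_of_forall_pos_le_add fun ε hε => ?_
  obtain ⟨a, ha⟩ := exists_opt hg h hε
  obtain ⟨n, hn⟩ := ha.exists
  linarith [payoff_le_one (q := q) hg x a n]

lemma play_shift (x : X) (a : ℕ → I) (T t : ℕ) :
    play q (play q x a T) (fun s => a (s + T)) t = play q x a (t + T) := by
  induction t with
  | zero => simp [play]
  | succ t ih => rw [play, ih, Nat.add_right_comm, play]

lemma total_shift (x : X) (a : ℕ → I) (T n : ℕ) :
    total q g x a (T + n) =
      total q g x a T + total q g (play q x a T) (fun s => a (s + T)) n := by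
  unfold total
  rw [Finset.sum_range_add]
  congr 1
  refine Finset.sum_congr rfl fun t _ => ?_
  rw [play_shift, add_comm]

lemma payoff_shift (hg : ∀ x i, g x i ∈ Set.Icc (0 : ℝ) 1) (x : X) (a : ℕ → I) (T n : ℕ) :
    |payoff q g x a n - payoff q g (play q x a T) (fun s => a (s + T)) n| ≤ T / n := by
  rw [payoff_eq, payoff_eq, ← sub_div, abs_div, Nat.abs_cast]
  gcongr
  have h1 := total_shift (q := q) (g := g) x a T n
  have h2 := total_shift (q := q) (g := g) x a n T
  rw [add_comm n T] at h2
  have h3 := total_nonneg (q := q) hg x a T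
  have h4 := total_le (q := q) hg x a T
  have h5 := total_nonneg (q := q) hg (play q x a n) (fun s => a (s + n)) T
  have h6 := total_le (q := q) hg (play q x a n) (fun s => a (s + n)) T
  rw [abs_le]; constructor <;> linarith

lemma eventually_shift (hg : ∀ x i, g x i ∈ Set.Icc (0 : ℝ) 1) (x : X) (a : ℕ → I) (T : ℕ)
    {ε : ℝ} (hε : 0 < ε) :
    ∀ᶠ n in atTop,
      |payoff q g x a n - payoff q g (play q x a T) (fun s => a (s + T)) n| < ε := by
  have := tendsto_const_div_atTop_nhds_zero_nat (T : ℝ)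
  filter_upwards [this.eventually_lt_const hε] with n hn
  exact (payoff_shift hg x a T n).trans_lt hn

lemma play_congr {x : X} {a b : ℕ → I} {T : ℕ} (h : ∀ t < T, a t = b t) :
    ∀ t ≤ T, play q x a t = play q x b t := by
  intro t
  induction t with
  | zero => intro _; rfl
  | succ t ih => intro ht; rw [play, play, ih (by omega), h t (by omega)]

lemma payoff_congr {x : X} {a b : ℕ → I} {T : ℕ} (h : ∀ t < T, a t = b t) {n : ℕ} (hn : n ≤ T) :
    payoff q g x a n = payoff q g x b n := by
  unfold payoff
  congr 1
  refine Finset.sum_congr rfl fun t ht => ?_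
  have := Finset.mem_range.1 ht
  rw [play_congr h t (by omega), h t (by omega)]

/-- follow a until T, then s -/
def switch (a : ℕ → I) (T : ℕ) (s : ℕ → I) : ℕ → I := fun t => if t < T then a t else s (t - T)

lemma switch_lt (a : ℕ → I) (T : ℕ) (s : ℕ → I) : ∀ t < T, switch a T s t = a t := by
  intro t ht; simp [switch, ht]

lemma switch_shift (a : ℕ → I) (T : ℕ) (s : ℕ → I) : (fun t => switch a T s (t + T)) = s := by
  funext t; simp [switch]

/-- the sum of all stages keeps the value -/
def Good (q : X → I → X) (g : X → I → ℝ) (v : X → ℝ) (x : X) (V ε : ℝ) (a : ℕ → I) : Prop :=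
  (∀ t, v (play q x a t) = V) ∧ ∀ᶠ n in atTop, V - ε ≤ payoff q g x a n

lemma good_switch (hg : ∀ x i, g x i ∈ Set.Icc (0 : ℝ) 1) {v : X → ℝ} {x : X} {V ε ε' : ℝ}
    {a : ℕ → I} (ha : ∀ t, v (play q x a t) = V) {T : ℕ} {s : ℕ → I} (hε : ε < ε')
    (hs : Good q g v (play q x a T) V ε s) : Good q g v x V ε' (switch a T s) := by
  have hT : play q x (switch a T s) T = play q x a T := play_congr (switch_lt a T s) T le_rfl
  constructor
  · intro t
    rcases le_total t T with h | h
    · rw [play_congr (switch_lt a T s) t h, ha]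
    · obtain ⟨u, rfl⟩ := Nat.exists_eq_add_of_le' h
      rw [← play_shift, switch_shift, hT, hs.1]
  · have := eventually_shift (q := q) hg x (switch a T s) T (sub_pos.2 hε)
    rw [switch_shift, hT] at this
    filter_upwards [this, hs.2] with n h1 h2
    have := (abs_lt.1 h1).1
    linarith

lemma value_mono [Nonempty I] (hg : ∀ x i, g x i ∈ Set.Icc (0 : ℝ) 1) {v : X → ℝ}
    (hv : ∀ x, HasUniformValuePure q g x (v x)) (x : X) (i : I) : v (q x i) ≤ v x := by
  refine le_of_forall_pos_le_add fun ε hε => ?_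
  obtain ⟨s, hs⟩ := exists_opt hg (hv (q x i)) (half_pos hε)
  have h1 := eventually_shift (q := q) hg x (switch (fun _ => i) 1 s) 1 (half_pos hε)
  rw [switch_shift] at h1
  have hp : play q x (switch (fun _ => i) 1 s) 1 = q x i := by simp [play, switch]
  rw [hp] at h1
  have := le_value (c := v (q x i) - ε) hg (hv x) (a := switch (fun _ => i) 1 s) (by
    filter_upwards [h1, hs] with n h1 h2
    have := (abs_lt.1 h1).1
    linarith)
  linarith

lemma value_along [Nonempty I] (hg : ∀ x i, g x i ∈ Set.Icc (0 : ℝ) 1) {v : X → ℝ}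
    (hv : ∀ x, HasUniformValuePure q g x (v x)) {x : X} {a : ℕ → I} {c : ℝ}
    (ha : ∀ᶠ n in atTop, c ≤ payoff q g x a n) (t : ℕ) : c ≤ v (play q x a t) := by
  refine le_of_forall_pos_le_add fun ε hε => ?_
  have h1 := eventually_shift (q := q) hg x a t hε
  have := le_value (c := c - ε) hg (hv (play q x a t)) (a := fun s => a (s + t)) (by
    filter_upwards [h1, ha] with n h1 h2
    have := (abs_lt.1 h1).2
    linarith)
  linarith

/-- multiset of actions played before t -/
def acts (a : ℕ → I) (t : ℕ) : Multiset I := (Multiset.range t).map a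

lemma acts_mono (a : ℕ → I) : Monotone (acts a) := fun _ _ h =>
  Multiset.map_le_map (Multiset.range_le.2 h)

lemma play_eq_foldl [RightCommutative q] (x : X) (a : ℕ → I) (t : ℕ) :
    play q x a t = Multiset.foldl q x (acts a t) := by
  induction t with
  | zero => simp [play, acts]
  | succ t ih =>
    have h : acts a (t + 1) = acts a t + {a t} := by
      rw [acts, Multiset.range_succ, Multiset.map_cons, ← Multiset.singleton_add, add_comm, acts]
    rw [play, ih, h, Multiset.foldl_add]
    rw [← Multiset.cons_zero, Multiset.foldl_cons, Multiset.foldl_zero]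

lemma foldl_anti [RightCommutative q] {v : X → ℝ} (hmono : ∀ x i, v (q x i) ≤ v x) (x : X)
    {s u : Multiset I} (h : s ≤ u) : v (Multiset.foldl q x u) ≤ v (Multiset.foldl q x s) := by
  obtain ⟨w, rfl⟩ := Multiset.le_iff_exists_add.1 h
  rw [Multiset.foldl_add]
  generalize Multiset.foldl q x s = y
  induction w using Multiset.induction generalizing y with
  | empty => simp
  | cons i w ih =>
    rw [Multiset.foldl_cons]
    exact (ih (Multiset.le_add_right _ _) _).trans (hmono _ _)

open Classical in
/-- limiting number of uses of each action -/
def lim_count (a : ℕ → I) (i : I) : ℕ∞ := ⨆ t, ((acts a t).count i : ℕ∞)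

lemma exists_acts_le [Fintype I] {a b : ℕ → I} (h : lim_count a ≤ lim_count b) (t : ℕ) :
    ∃ t', acts a t ≤ acts b t' := by
  classical
  have key : ∀ i, ∃ t', (acts a t).count i ≤ (acts b t').count i := by
    intro i
    by_contra! hlt
    obtain ⟨k, hk⟩ : ∃ k, (acts a t).count i = k + 1 :=
      Nat.exists_eq_succ_of_ne_zero (by have := hlt 0; omega)
    have h1 : ((acts a t).count i : ℕ∞) ≤ lim_count a i := by
      unfold lim_count
      convert le_iSup (fun t => ((acts a t).count i : ℕ∞)) t
    have h2 : lim_count b i ≤ (k : ℕ∞) := by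
      unfold lim_count
      refine iSup_le fun t' => ?_
      have := hlt t'
      rw [hk] at this
      have h3 : (acts b t').count i ≤ k := by omega
      have h4 : ((acts b t').count i : ℕ∞) ≤ (k : ℕ∞) := Nat.cast_le.2 h3
      convert h4
    have h3 := (h1.trans (h i)).trans h2
    rw [hk] at h3
    have := Nat.cast_le.1 h3
    omega
  choose T hT using key
  refine ⟨Finset.univ.sup T, Multiset.le_iff_count.2 fun i => (hT i).trans ?_⟩
  exact Multiset.count_le_of_le _ (acts_mono b (Finset.le_sup (Finset.mem_univ i)))

lemma exists_good [Fintype I] [Nonempty I] (hg : ∀ x i, g x i ∈ Set.Icc (0 : ℝ) 1)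
    (hcomm : ∀ x i i', q (q x i) i' = q (q x i') i) {v : X → ℝ}
    (hv : ∀ x, HasUniformValuePure q g x (v x)) (x : X) {ε : ℝ} (hε : 0 < ε) :
    ∃ a, Good q g v x (v x) ε a := by
  haveI : RightCommutative q := ⟨hcomm⟩
  have hmono := value_mono hg hv
  have hpos : ∀ n : ℕ, (0 : ℝ) < 1 / (n + 1) := fun n => Nat.one_div_pos_of_nat
  choose a ha using fun n : ℕ => exists_opt hg (hv x) (hpos n)
  obtain ⟨φ, hφ⟩ := (wellQuasiOrdered_le (α := I → ℕ∞)).exists_monotone_subseq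
    (fun n => lim_count (a n))
  have hφ1 : ∀ n, n ≤ φ n := fun n => φ.strictMono.le_apply
  have hlim := tendsto_one_div_add_atTop_nhds_zero_nat (𝕜 := ℝ)
  obtain ⟨k, hk⟩ := (hlim.eventually_lt_const hε).exists
  refine ⟨a (φ k), fun t => le_antisymm ?_ ?_, ?_⟩
  · have := foldl_anti (q := q) hmono x (Multiset.zero_le (acts (a (φ k)) t))
    rwa [← play_eq_foldl, Multiset.foldl_zero] at this
  · refine le_of_forall_pos_le_add fun δ hδ => ?_
    obtain ⟨m, hm1, hm2⟩ := ((hlim.eventually_lt_const hδ).and (eventually_ge_atTop k)).exists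
    obtain ⟨t', ht'⟩ := exists_acts_le (hφ k m hm2) t
    have h1 := foldl_anti (q := q) hmono x ht'
    rw [← play_eq_foldl, ← play_eq_foldl] at h1
    have h2 := value_along hg hv (ha (φ m)) t'
    have h3 : (1 : ℝ) / ((φ m : ℕ) + 1) ≤ 1 / (m + 1) := by
      have : (m : ℝ) ≤ (φ m : ℕ) := by exact_mod_cast hφ1 m
      gcongr
    linarith
  · filter_upwards [ha (φ k)] with n hn
    have h3 : (1 : ℝ) / ((φ k : ℕ) + 1) ≤ 1 / (k + 1) := by
      have : (k : ℝ) ≤ (φ k : ℕ) := by exact_mod_cast hφ1 k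
      gcongr
    linarith

lemma step_one (hg : ∀ x i, g x i ∈ Set.Icc (0 : ℝ) 1) {v : X → ℝ} {x : X} {V ε ε' : ℝ}
    (hV : V ≤ 1) (hε0 : 0 < ε') (hε : ε' ≤ ε)
    (hgood : ∀ y, v y = V → ∀ ε > 0, ∃ a, Good q g v y V ε a)
    {a : ℕ → I} (ha : ∀ t, v (play q x a t) = V) {T₀ : ℕ}
    (hT₀ : ∀ n ≥ T₀, V - ε ≤ payoff q g x a n) (L : ℕ) :
    ∃ b : Fin L → (ℕ → I), (∀ j, Good q g v x V ε' (b j)) ∧ (∀ j, ∀ t < T₀, b j t = a t) ∧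
      ∀ n ≥ T₀, L * (V - ε) - 1 ≤ ∑ j, payoff q g x (b j) n := by
  choose s hs using fun T => hgood (play q x a T) (ha T) (ε' / 2) (half_pos hε0)
  have hb : ∀ T, Good q g v x V ε' (switch a T (s T)) := fun T =>
    good_switch hg ha (half_lt_self hε0) (hs T)
  have hN : ∀ T, ∃ N > T, ∀ n ≥ N, V - ε' ≤ payoff q g x (switch a T (s T)) n := by
    intro T
    obtain ⟨N, hN⟩ := eventually_atTop.1 (hb T).2
    exact ⟨max N (T + 1), by omega, fun n hn => hN n (by omega)⟩
  choose N hN1 hN2 using hN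
  let T : ℕ → ℕ := fun j => N^[j] T₀
  have hTs : ∀ j, T (j + 1) = N (T j) := fun j => Function.iterate_succ_apply' N j T₀
  have hTm : StrictMono T := strictMono_nat_of_lt_succ fun j => by rw [hTs]; exact hN1 _
  have hT0 : ∀ j, T₀ ≤ T j := fun j => hTm.monotone (Nat.zero_le j)
  refine ⟨fun j => switch a (T j) (s (T j)), fun j => hb _, fun j t ht =>
    switch_lt _ _ _ t (ht.trans_le (hT0 j)), fun n hn => ?_⟩
  have key : ∀ j : ℕ, ¬ (T j < n ∧ n < T (j + 1)) →
      V - ε ≤ payoff q g x (switch a (T j) (s (T j))) n := by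
    intro j hj
    by_cases h : T j < n
    · have : T (j + 1) ≤ n := by omega
      rw [hTs] at this
      linarith [hN2 (T j) n this]
    · rw [payoff_congr (switch_lt _ _ _) (not_lt.1 h)]
      exact hT₀ n hn
  suffices h : -1 ≤ ∑ j : Fin L, (payoff q g x (switch a (T j) (s (T j))) n - (V - ε)) by
    rw [Finset.sum_sub_distrib] at h
    simp at h ⊢
    linarith
  by_cases hex : ∃ j : Fin L, T j < n ∧ n < T (j + 1)
  · obtain ⟨j₀, h1, h2⟩ := hex
    calc (-1 : ℝ) = ∑ j : Fin L, (if j = j₀ then (-1 : ℝ) else 0) := by simp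
      _ ≤ _ := Finset.sum_le_sum fun j _ => by
        split_ifs with h
        · have := payoff_nonneg (q := q) hg x (switch a (T j) (s (T j))) n
          linarith
        · have := key j (by
            rintro ⟨h3, h4⟩
            have h5 := hTm.lt_iff_lt.1 (h1.trans h4)
            have h6 := hTm.lt_iff_lt.1 (h3.trans h2)
            exact h (Fin.ext (by omega)))
          linarith
  · push Not at hex
    have : 0 ≤ ∑ j : Fin L, (payoff q g x (switch a (T j) (s (T j))) n - (V - ε)) :=
      Finset.sum_nonneg fun j _ => by
        have := key j (by rintro ⟨h1, h2⟩; exact absurd (hex j h1) (by omega))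
        linarith
    linarith

lemma continuous_payoff [TopologicalSpace I] [DiscreteTopology I] (x : X) (n : ℕ) :
    Continuous fun a : ℕ → I => payoff q g x a n := by
  have hp : ∀ t, IsLocallyConstant (fun a : ℕ → I => play q x a t) := by
    intro t
    induction t with
    | zero => exact IsLocallyConstant.const x
    | succ t ih =>
      exact ih.comp₂ ((IsLocallyConstant.iff_continuous _).2 (continuous_apply t)) q
  unfold payoff
  refine continuous_const.mul (continuous_finset_sum _ fun t _ => ?_)
  exact ((hp t).comp₂ ((IsLocallyConstant.iff_continuous _).2 (continuous_apply t)) g).continuous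

lemma exists_unif {A : Type*} [MeasurableSpace A] [TopologicalSpace A] [BorelSpace A]
    {Ω : Type} [Fintype Ω] [Nonempty Ω] (σ : Ω → A) :
    ∃ μ : ProbabilityMeasure A, ∀ f : A → ℝ, Continuous f →
      ∫ a, f a ∂(μ : Measure A) = (∑ ω, f (σ ω)) / Fintype.card Ω := by
  have hc : (Fintype.card Ω : ENNReal) ≠ 0 := by simp
  let μ : Measure A := (Fintype.card Ω : ENNReal)⁻¹ • ∑ ω, Measure.dirac (σ ω)
  have hμ : IsProbabilityMeasure μ := ⟨by
    simp [μ, Measure.smul_apply, Measure.finset_sum_apply]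
    exact ENNReal.inv_mul_cancel hc (by simp)⟩
  refine ⟨⟨μ, hμ⟩, fun f hf => ?_⟩
  have hm : StronglyMeasurable f := hf.measurable.stronglyMeasurable
  change ∫ a, f a ∂μ = _
  simp only [μ]
  rw [integral_smul_measure, integral_finset_sum_measure]
  · simp only [integral_dirac' f _ hm]
    simp
    ring
  · intro i _
    exact integrable_dirac' hm (by simp)

section Measures

variable [TopologicalSpace I] [MeasurableSpace I]

/-- uniform mixtures of finitely many good strategies -/
def Mix (q : X → I → X) (g : X → I → ℝ) (v : X → ℝ) (x : X) (V ε : ℝ)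
    (μ : ProbabilityMeasure (ℕ → I)) : Prop :=
  ∃ (Ω : Type) (_ : Fintype Ω) (_ : Nonempty Ω) (σ : Ω → ℕ → I),
    (∀ ω, Good q g v x V ε (σ ω)) ∧
    ∀ n, ∫ a, payoff q g x a n ∂(μ : Measure (ℕ → I)) =
      (∑ ω, payoff q g x (σ ω) n) / Fintype.card Ω

lemma step_mix [DiscreteTopology I] [BorelSpace (ℕ → I)]
    (hg : ∀ x i, g x i ∈ Set.Icc (0 : ℝ) 1) {v : X → ℝ} {x : X} {V ε ε' : ℝ}
    (hV : V ≤ 1) (hε0 : 0 < ε') (hε : ε' ≤ ε)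
    (hgood : ∀ y, v y = V → ∀ ε > 0, ∃ a, Good q g v y V ε a)
    {μ : ProbabilityMeasure (ℕ → I)} (hμ : Mix q g v x V ε μ) {L : ℕ} (hL : 0 < L) :
    ∃ μ' : ProbabilityMeasure (ℕ → I), Mix q g v x V ε' μ' ∧ ∃ T : ℕ,
      (∀ n ≤ T, ∫ a, payoff q g x a n ∂(μ' : Measure (ℕ → I)) =
        ∫ a, payoff q g x a n ∂(μ : Measure (ℕ → I))) ∧
      ∀ n ≥ T, V - ε - 1 / L ≤ ∫ a, payoff q g x a n ∂(μ' : Measure (ℕ → I)) := by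
  obtain ⟨Ω, _, _, σ, hσ, hint⟩ := hμ
  obtain ⟨T, hT⟩ := eventually_atTop.1 (eventually_all.2 fun ω => (hσ ω).2)
  choose b hb1 hb2 hb3 using fun ω =>
    step_one hg hV hε0 hε hgood (hσ ω).1 (T₀ := T) (fun n hn => hT n hn ω) L
  haveI : Nonempty (Fin L) := ⟨⟨0, hL⟩⟩
  obtain ⟨μ', hμ'⟩ := exists_unif (fun p : Ω × Fin L => b p.1 p.2)
  have hint' := fun n => hμ' _ (continuous_payoff (q := q) (g := g) x n)
  have hΩ : (0 : ℝ) < Fintype.card Ω := by exact_mod_cast Fintype.card_pos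
  have hL' : (0 : ℝ) < L := by exact_mod_cast hL
  refine ⟨μ', ⟨Ω × Fin L, inferInstance, inferInstance, _, fun p => hb1 p.1 p.2, hint'⟩, T, ?_, ?_⟩
  · intro n hn
    rw [hint', hint, Fintype.sum_prod_type]
    have : ∀ ω, ∑ j, payoff q g x (b ω j) n = L * payoff q g x (σ ω) n := by
      intro ω
      rw [Finset.sum_congr rfl fun j _ => payoff_congr (hb2 ω j) hn]
      simp
    simp only [this, ← Finset.mul_sum, Fintype.card_prod, Fintype.card_fin]
    push_cast
    field_simp
  · intro n hn
    rw [hint', Fintype.sum_prod_type]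
    have h1 : Fintype.card Ω * (L * (V - ε) - 1) ≤ ∑ ω, ∑ j, payoff q g x (b ω j) n := by
      calc _ = ∑ ω : Ω, (L * (V - ε) - 1) := by simp [mul_sub]
        _ ≤ _ := Finset.sum_le_sum fun ω _ => hb3 ω n hn
    simp only [Fintype.card_prod, Fintype.card_fin]
    push_cast
    rw [le_div_iff₀ (by positivity)]
    refine le_trans (le_of_eq ?_) h1
    field_simp

end Measures

end Aux

/-- In a deterministic commutative MDP having a uniform value in pure strategies at every
initial state, every initial state admits a `0`-optimal mixed strategy: a Borel probability
measure `μ` on `I^ℕ` whose expected `n`-stage payoffs converge to the uniform value. -/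
theorem exists_zero_optimal_mixed_strategy
    {X I : Type*} [Fintype I] [Nonempty I]
    [TopologicalSpace I] [DiscreteTopology I] [MeasurableSpace I] [BorelSpace I]
    (q : X → I → X) (g : X → I → ℝ)
    (hg : ∀ x i, g x i ∈ Set.Icc (0 : ℝ) 1)
    (hcomm : ∀ x i i', q (q x i) i' = q (q x i') i)
    (v : X → ℝ) (hv : ∀ x, HasUniformValuePure q g x (v x))
    (x₁ : X) :
    ∃ μ : Measure (ℕ → I), IsProbabilityMeasure μ ∧
      Tendsto (fun n => ∫ a, payoff q g x₁ a n ∂μ) atTop (𝓝 (v x₁)) := by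

  have hV : v x₁ ≤ 1 := value_le_one hg (hv x₁)
  have hgood : ∀ y, v y = v x₁ → ∀ ε > 0, ∃ a, Good q g v y (v x₁) ε a := by
    intro y hy ε hε
    rw [← hy]
    exact exists_good hg hcomm hv y hε
  let e : ℕ → ℝ := fun k => 1 / ((k : ℝ) + 1)
  have he0 : ∀ k, 0 < e k := fun k => Nat.one_div_pos_of_nat
  have hea : Antitone e := fun k l h => Nat.one_div_le_one_div h
  have hinit : ∃ μ : ProbabilityMeasure (ℕ → I), Mix q g v x₁ (v x₁) (e 0) μ := by
    obtain ⟨a, ha⟩ := hgood x₁ rfl (e 0) (he0 0)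
    obtain ⟨μ, hμ⟩ := exists_unif (fun _ : Unit => a)
    exact ⟨μ, Unit, inferInstance, inferInstance, _, fun _ => ha,
      fun n => hμ _ (continuous_payoff (q := q) (g := g) x₁ n)⟩
  choose μ₀ hμ₀ using hinit
  choose nx hnx T hT1 hT2 using fun (k : ℕ) (μ : ProbabilityMeasure (ℕ → I))
    (h : Mix q g v x₁ (v x₁) (e k) μ) =>
    step_mix hg hV (he0 (k + 1)) (hea (Nat.le_succ k)) hgood h (Nat.succ_pos k)
  let S : ∀ k : ℕ, {μ : ProbabilityMeasure (ℕ → I) // Mix q g v x₁ (v x₁) (e k) μ} :=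
    fun k => Nat.rec ⟨μ₀, hμ₀⟩ (fun k μ => ⟨nx k μ.1 μ.2, hnx k μ.1 μ.2⟩) k
  let E : ℕ → ℕ → ℝ := fun k n => ∫ a, payoff q g x₁ a n ∂((S k).1 : Measure (ℕ → I))
  have hE1 : ∀ k, ∀ n ≤ T k (S k).1 (S k).2, E (k + 1) n = E k n := fun k =>
    hT1 k (S k).1 (S k).2
  have hE2 : ∀ k, ∀ n ≥ T k (S k).1 (S k).2, v x₁ - 2 * e k ≤ E (k + 1) n := fun k n hn => by
    have h := hT2 k (S k).1 (S k).2 n hn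
    have h' : (1 : ℝ) / ((k.succ : ℕ) : ℝ) = e k := by simp [e]
    rw [h'] at h
    change _ ≤ E (k + 1) n at h
    linarith
  have hE3 : ∀ k, ∀ n ≥ T k (S k).1 (S k).2, ∀ j ≥ k + 1, v x₁ - 2 * e k ≤ E j n := by
    intro k n hn j hj
    induction j, hj using Nat.le_induction with
    | base => exact hE2 k n hn
    | succ j hj ih =>
      rcases le_total n (T j (S j).1 (S j).2) with h | h
      · rw [hE1 j n h]; exact ih
      · have := hE2 j n h
        have := hea (show k ≤ j by omega)
        linarith
  obtain ⟨μ, -, hμ⟩ := isCompact_univ.exists_mapClusterPt (f := atTop)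
    (u := fun k => (S k).1) (by simp)
  have hlow : ∀ k, ∀ n ≥ T k (S k).1 (S k).2,
      v x₁ - 2 * e k ≤ ∫ a, payoff q g x₁ a n ∂(μ : Measure (ℕ → I)) := by
    intro k n hn
    have hcl : IsClosed {ν : ProbabilityMeasure (ℕ → I) |
        v x₁ - 2 * e k ≤ ∫ a, payoff q g x₁ a n ∂(ν : Measure (ℕ → I))} :=
      isClosed_le continuous_const (ProbabilityMeasure.continuous_integral_continuousMap
        (⟨_, continuous_payoff (q := q) (g := g) x₁ n⟩ : C(ℕ → I, ℝ)))
    refine hcl.mem_of_mapClusterPt hμ ?_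
    filter_upwards [eventually_ge_atTop (k + 1)] with j hj
    exact hE3 k n hn j hj
  refine ⟨μ, inferInstance, ?_⟩
  refine tendsto_order.2 ⟨fun c hc => ?_, fun c hc => ?_⟩
  · have hlim : Tendsto e atTop (𝓝 0) := tendsto_one_div_add_atTop_nhds_zero_nat (𝕜 := ℝ)
    obtain ⟨k, hk⟩ := (hlim.eventually_lt_const (show 0 < (v x₁ - c) / 2 by linarith)).exists
    filter_upwards [eventually_ge_atTop (T k (S k).1 (S k).2)] with n hn
    linarith [hlow k n hn]
  · filter_upwards [eventually_nValue hg (hv x₁) hc] with n hn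
    refine lt_of_le_of_lt ?_ hn
    have hi : Integrable (fun a => payoff q g x₁ a n) (μ : Measure (ℕ → I)) :=
      Integrable.of_bound
        (continuous_payoff (q := q) (g := g) x₁ n).measurable.aestronglyMeasurable 1
        (Eventually.of_forall fun a => by
          rw [Real.norm_of_nonneg (payoff_nonneg hg _ _ _)]; exact payoff_le_one hg _ _ _)
    calc _ ≤ ∫ a, nValue q g x₁ n ∂(μ : Measure (ℕ → I)) :=
          integral_mono hi (integrable_const _) fun a => payoff_le_nValue hg _ _ _
      _ = _ := by simp
end
end

section
/- For every m ≥ 1 there exists an integer f(m) ≥ 1 such that: for every nonempty compact subset X of ℝ^m (endowed with the ℓ¹ norm ‖y‖₁ = ∑_{i=1}^m |y_i|) and every map M : X → X that is 1-Lipschitz with respect to ‖·‖₁, there exist an integer L with 1 ≤ L ≤ f(m) and maps B₀, …, B_{L−1} : X → X such that for every l ∈ {0, …, L−1} and every x ∈ X, the sequence of iterates M^{(tL + l)}(x) converges to B_l(x) as t → ∞. -/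
open Filter Topology

noncomputable section

/-- A set of differences containing all differences of equally coloured points, for some colouring
with at most `r` colours. -/
def ColDiff {G : Type*} [AddCommGroup G] (r : ℕ) (D : Set G) : Prop :=
  ∃ κ : G → Fin r, ∀ x x', κ x = κ x' → x' - x ∈ D

lemma ColDiff.mono {G : Type*} [AddCommGroup G] {r : ℕ} {D D' : Set G} (h : ColDiff r D)
    (hD : D ⊆ D') : ColDiff r D' := by
  obtain ⟨κ, hκ⟩ := h
  exact ⟨κ, fun x x' e => hD (hκ x x' e)⟩

lemma ColDiff.inter {G : Type*} [AddCommGroup G] {r s : ℕ} {D D' : Set G} (h : ColDiff r D)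
    (h' : ColDiff s D') : ColDiff (r * s) (D ∩ D') := by
  obtain ⟨κ, hκ⟩ := h
  obtain ⟨κ', hκ'⟩ := h'
  refine ⟨fun x => finProdFinEquiv (κ x, κ' x), fun x x' e => ?_⟩
  have e := finProdFinEquiv.injective e
  rw [Prod.mk.injEq] at e
  exact ⟨hκ x x' e.1, hκ' x x' e.2⟩

/-- `E` is open in a quantitative sense. -/
def ROpen {G : Type*} [AddCommGroup G] (r : ℕ) (E : Set G) : Prop :=
  ∀ b ∈ E, ColDiff r {y | b + y ∈ E ∧ b - y ∈ E}

/-- The bound. -/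
def bnd (C : ℕ) : ℕ → ℕ → ℕ
  | 0, _ => 0
  | n + 1, r => max r (bnd C n (r * ((r * C) * (r * C))))

lemma exists_mult {G : Type*} [AddCommGroup G] {r : ℕ} {D : Set G} (h : ColDiff r D) (g : G) :
    ∃ k : ℕ, 1 ≤ k ∧ k ≤ r ∧ k • g ∈ D := by
  obtain ⟨κ, hκ⟩ := h
  obtain ⟨i, j, hij, e⟩ := Fintype.exists_ne_map_eq_of_card_lt
    (fun i : Fin (r + 1) => κ ((i : ℕ) • g)) (by simp)
  have key : ∀ i j : Fin (r + 1), i < j → κ ((i : ℕ) • g) = κ ((j : ℕ) • g) →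
      ∃ k : ℕ, 1 ≤ k ∧ k ≤ r ∧ k • g ∈ D := by
    intro i j hij e
    have h1 : (i : ℕ) < j := hij
    refine ⟨j - i, by omega, by omega, ?_⟩
    have := hκ _ _ e
    rwa [sub_nsmul g h1.le, ← sub_eq_add_neg]
  rcases lt_or_gt_of_ne hij with h | h
  · exact key i j h e
  · exact key j i h e.symm

/-- The main induction: large betweenness-free sets. -/
lemma exists_free {G C : Type*} [NormedAddCommGroup G] [CompactSpace G] [Fintype C]
    (f : C → G → ℝ) (hf : ∀ c x y, f c y - f c x ≤ ‖y - x‖)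
    (hf' : ∀ x y, ∃ c, f c y - f c x = ‖y - x‖) (g : G) (n : ℕ) :
    ∀ (r : ℕ) (E : Set G), IsClosed E → (0 : G) ∈ E → (∀ y ∈ E, -y ∈ E) → ROpen r E →
      (∀ k : ℕ, 1 ≤ k → k ≤ bnd (Fintype.card C) n r → ‖k • g‖ ≠ 0) →
      ∃ P : Finset G, P.card = n + 1 ∧ (0 : G) ∈ P ∧ (∀ p ∈ P, ∀ q ∈ P, p - q ∈ E) ∧
        ∀ p ∈ P, ∀ q ∈ P, ∀ s ∈ P, p ≠ q → q ≠ s → p ≠ s → ‖p - s‖ < ‖p - q‖ + ‖q - s‖ := by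
  classical
  induction n with
  | zero =>
    intro r E _ h0 _ _ _
    refine ⟨{0}, by simp, by simp, by simpa using h0, ?_⟩
    intro p hp q hq
    simp only [Finset.mem_singleton] at hp hq
    intro s _ h
    exact absurd (hp.trans hq.symm) h
  | succ n ih =>
    intro r E hE h0 hneg hop hg
    obtain ⟨a, haE, hmax⟩ := hE.isCompact.exists_isMaxOn ⟨0, h0⟩ continuous_norm.continuousOn
    have hmax : ∀ y ∈ E, ‖y‖ ≤ ‖a‖ := fun y hy => hmax hy
    obtain ⟨k, hk1, hk2, hk⟩ := exists_mult (hop 0 h0) g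
    have hpos : 0 < ‖a‖ := by
      have h1 := hmax (k • g) (by simpa using hk.1)
      have h2 := hg k hk1 (hk2.trans (le_max_left _ _))
      exact lt_of_lt_of_le (lt_of_le_of_ne (norm_nonneg _) h2.symm) h1
    set A : Set G := {b | b ∈ E ∧ ‖b‖ = ‖a‖} with hA
    have hAop : ROpen (r * Fintype.card C) A := by
      rintro b ⟨hbE, hb⟩
      choose c hc using fun x => hf' x (x + b)
      have hcol : ColDiff (Fintype.card C) {y : G | 2 * ‖b‖ ≤ ‖b + y‖ + ‖b - y‖} := by
        refine ⟨fun x => Fintype.equivFin C (c x), fun x x' e => ?_⟩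
        have e : c x = c x' := (Fintype.equivFin C).injective e
        have h1 := hc x
        have h2 := hc x'
        rw [← e] at h2
        have h3 := hf (c x) x (x' + b)
        have h4 := hf (c x) x' (x + b)
        have e1 : x' + b - x = b + (x' - x) := by abel
        have e2 : x + b - x' = b - (x' - x) := by abel
        rw [e1] at h3
        rw [e2] at h4
        simp only [add_sub_cancel_left] at h1 h2
        simp only [Set.mem_ofPred_eq]
        linarith
      refine ((hop b hbE).inter hcol).mono ?_
      rintro y ⟨⟨h1, h2⟩, h3⟩
      simp only [Set.mem_ofPred_eq] at h3
      have h4 := hmax _ h1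
      have h5 := hmax _ h2
      exact ⟨⟨h1, by linarith⟩, ⟨h2, by linarith⟩⟩
    have hAneg : ∀ y ∈ A, -y ∈ A := fun y hy => ⟨hneg y hy.1, by rw [norm_neg]; exact hy.2⟩
    have hAcl : IsClosed A := hE.inter (isClosed_eq continuous_norm continuous_const)
    set E' : Set G := {y | y ∈ E ∧ a + y ∈ A ∧ a - y ∈ A} with hE'
    have hE'cl : IsClosed E' :=
      hE.inter ((hAcl.preimage (continuous_const.add continuous_id)).inter
        (hAcl.preimage (continuous_const.sub continuous_id)))
    have haA : a ∈ A := ⟨haE, rfl⟩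
    have h0' : (0 : G) ∈ E' := ⟨h0, by simpa using haA, by simpa using haA⟩
    have hneg' : ∀ y ∈ E', -y ∈ E' := by
      rintro y ⟨h1, h2, h3⟩
      exact ⟨hneg y h1, by simpa [← sub_eq_add_neg] using h3, by simpa using h2⟩
    have hop' : ROpen (r * ((r * Fintype.card C) * (r * Fintype.card C))) E' := by
      rintro y ⟨h1, h2, h3⟩
      refine ((hop y h1).inter ((hAop _ h2).inter (hAop _ h3))).mono ?_
      rintro z ⟨⟨u1, u2⟩, ⟨u3, u4⟩, ⟨u5, u6⟩⟩
      refine ⟨⟨u1, ?_, ?_⟩, ⟨u2, ?_, ?_⟩⟩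
      · rwa [← add_assoc]
      · rwa [← sub_sub]
      · rwa [← add_sub_assoc]
      · rwa [← sub_add]
    obtain ⟨P, hcard, h0P, hPE, hfree⟩ := ih _ E' hE'cl h0' hneg' hop'
      (fun k h1 h2 => hg k h1 (h2.trans (le_max_right _ _)))
    have hPE0 : ∀ p ∈ P, p ∈ E' := fun p hp => by simpa using hPE p hp 0 h0P
    have hd : ∀ p ∈ P, ‖a - p‖ = ‖a‖ := fun p hp => (hPE0 p hp).2.2.2
    have haP : a ∉ P := by
      intro h
      have := hd a h
      simp only [sub_self, norm_zero] at this
      linarith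
    have hd' : ∀ p ∈ P, ‖p - a‖ = ‖a‖ := fun p hp => by rw [norm_sub_rev]; exact hd p hp
    refine ⟨insert a P, by rw [Finset.card_insert_of_notMem haP, hcard],
      Finset.mem_insert_of_mem h0P, ?_, ?_⟩
    · intro p hp q hq
      rcases Finset.mem_insert.1 hp with hpa | hp2
      · rcases Finset.mem_insert.1 hq with hqa | hq2
        · simpa [hpa, hqa] using h0
        · rw [hpa]
          exact (hPE0 q hq2).2.2.1
      · rcases Finset.mem_insert.1 hq with hqa | hq2
        · have := hneg _ (hPE0 p hp2).2.2.1
          rw [hqa]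
          simpa using this
        · exact (hPE p hp2 q hq2).1
    · intro p hp q hq s hs hpq hqs hps
      rcases Finset.mem_insert.1 hp with hpa | hp2
      · rw [hpa] at hpq hps ⊢
        have hq := (Finset.mem_insert.1 hq).resolve_left (Ne.symm hpq)
        have hs := (Finset.mem_insert.1 hs).resolve_left (Ne.symm hps)
        rw [hd q hq, hd s hs]
        have := norm_pos_iff.2 (sub_ne_zero.2 hqs)
        linarith
      · rcases Finset.mem_insert.1 hq with hqa | hq2
        · rw [hqa] at hpq hqs ⊢
          have hs := (Finset.mem_insert.1 hs).resolve_left (Ne.symm hqs)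
          rw [hd s hs, hd' p hp2]
          have := hmax _ (hPE p hp2 s hs).1
          linarith
        · rcases Finset.mem_insert.1 hs with hsa | hs2
          · rw [hsa, hd' p hp2, hd' q hq2]
            have := norm_pos_iff.2 (sub_ne_zero.2 hpq)
            linarith
          · exact hfree p hp2 q hq2 s hs2 hpq hqs hps

/-- Betweenness-free sets are small. -/
lemma free_card {G C : Type*} [NormedAddCommGroup G] [Fintype C]
    (f : C → G → ℝ) (hf : ∀ c x y, f c y - f c x ≤ ‖y - x‖)
    (hf' : ∀ x y, ∃ c, f c y - f c x = ‖y - x‖) (P : Finset G)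
    (hP : ∀ p ∈ P, ∀ q ∈ P, ∀ s ∈ P, p ≠ q → q ≠ s → p ≠ s → ‖p - s‖ < ‖p - q‖ + ‖q - s‖) :
    P.card ≤ 2 ^ Fintype.card C := by
  classical
  have hinj : Function.Injective
      (fun (p : P) (c : C) => ∃ q ∈ P, q ≠ p.1 ∧ f c q - f c p = ‖q - p.1‖) := by
    rintro ⟨p, hp⟩ ⟨q, hq⟩ e
    by_contra hne
    have hne : p ≠ q := fun h => hne (by simp [h])
    obtain ⟨c, hc⟩ := hf' p q
    have e := congrFun e c
    simp only [eq_iff_iff] at e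
    obtain ⟨s, hs, hsq, h⟩ := e.1 ⟨q, hq, hne.symm, hc⟩
    have h1 := norm_pos_iff.2 (sub_ne_zero.2 hsq)
    have h2 := norm_pos_iff.2 (sub_ne_zero.2 hne.symm)
    have hps : p ≠ s := by
      rintro rfl
      linarith
    have h3 := hP p hp q hq s hs hne hsq.symm hps
    have h4 := hf c p s
    rw [norm_sub_rev p s, norm_sub_rev p q, norm_sub_rev q s] at h3
    linarith
  have := Fintype.card_le_of_injective _ hinj
  simpa using this

lemma compact_group {G C : Type*} [NormedAddCommGroup G] [CompactSpace G] [Fintype C]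
    (f : C → G → ℝ) (hf : ∀ c x y, f c y - f c x ≤ ‖y - x‖)
    (hf' : ∀ x y, ∃ c, f c y - f c x = ‖y - x‖) (g : G) :
    ∃ k : ℕ, 1 ≤ k ∧ k ≤ bnd (Fintype.card C) (2 ^ Fintype.card C) 1 ∧ ‖k • g‖ = 0 := by
  by_contra! hcon
  obtain ⟨P, hc, -, -, hP⟩ := exists_free f hf hf' g (2 ^ Fintype.card C) 1 Set.univ isClosed_univ
    (Set.mem_univ _) (fun _ _ => Set.mem_univ _)
    (fun b _ => ⟨fun _ => 0, fun _ _ _ => ⟨Set.mem_univ _, Set.mem_univ _⟩⟩) hcon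
  have := free_card f hf hf' P hP
  omega

/-- The bound for `ℓ¹`. -/
def bndL (m : ℕ) : ℕ :=
  bnd (Fintype.card (Fin m → Bool)) (2 ^ Fintype.card (Fin m → Bool)) 1

lemma compact_group_l1 {G : Type*} [NormedAddCommGroup G] [CompactSpace G] {m : ℕ}
    (F : G → PiLp 1 fun _ : Fin m => ℝ) (hF : ∀ x y, ‖F x - F y‖ = ‖x - y‖) (g : G) :
    ∃ k : ℕ, 1 ≤ k ∧ k ≤ bndL m ∧ ‖k • g‖ = 0 := by
  refine compact_group (C := Fin m → Bool)
    (fun c x => ∑ i, (if c i then F x i else - F x i)) ?_ ?_ g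
  · intro c x y
    rw [← hF, PiLp.norm_eq_of_L1, ← Finset.sum_sub_distrib]
    refine Finset.sum_le_sum fun i _ => ?_
    simp only [PiLp.sub_apply, Real.norm_eq_abs]
    split_ifs
    · exact le_abs_self _
    · have := neg_abs_le (F y i - F x i)
      linarith
  · intro x y
    refine ⟨fun i => decide (0 ≤ F y i - F x i), ?_⟩
    rw [← hF, PiLp.norm_eq_of_L1, ← Finset.sum_sub_distrib]
    refine Finset.sum_congr rfl fun i _ => ?_
    simp only [PiLp.sub_apply, Real.norm_eq_abs, decide_eq_true_eq]
    split_ifs with h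
    · rw [abs_of_nonneg h]
    · rw [abs_of_neg (not_le.1 h)]
      ring

lemma semi_group_l1 {H : Type*} [SeminormedAddCommGroup H] {m : ℕ}
    (X : Set (PiLp 1 fun _ : Fin m => ℝ)) (hX : IsCompact X)
    (F : H → PiLp 1 fun _ : Fin m => ℝ) (hFX : ∀ x, F x ∈ X)
    (hF : Isometry F) (g : H) :
    ∃ k : ℕ, 1 ≤ k ∧ k ≤ bndL m ∧ ‖k • g‖ = 0 := by
  have hI := hF.completion_extension
  have hmem : ∀ x, UniformSpace.Completion.extension F x ∈ X := by
    intro x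
    induction x using UniformSpace.Completion.induction_on with
    | hp => exact hX.isClosed.preimage hI.continuous
    | ih a => rw [UniformSpace.Completion.extension_coe hF.uniformContinuous]; exact hFX a
  have hcomp : CompactSpace (UniformSpace.Completion H) := by
    constructor
    have := hI.isClosedEmbedding.isCompact_preimage hX
    convert this
    symm
    exact Set.eq_univ_of_forall hmem
  obtain ⟨k, h1, h2, h3⟩ := compact_group_l1 (UniformSpace.Completion.extension F)
    (fun x y => by rw [← dist_eq_norm, hI.dist_eq, dist_eq_norm]) (g : UniformSpace.Completion H)
  refine ⟨k, h1, h2, ?_⟩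
  rw [← UniformSpace.Completion.norm_coe, ← h3]
  congr 1
  exact map_nsmul (UniformSpace.Completion.toCompl (α := H)) k g

/-- A copy of the integers without its norm. -/
def ZZ : Type := ℤ

instance : AddCommGroup ZZ := inferInstanceAs (AddCommGroup ℤ)

lemma bi_orbit {m : ℕ} (X : Set (PiLp 1 fun _ : Fin m => ℝ)) (hX : IsCompact X)
    (F : ℤ → PiLp 1 fun _ : Fin m => ℝ) (hFX : ∀ x, F x ∈ X)
    (hF : ∀ i j k, dist (F (i + k)) (F (j + k)) = dist (F i) (F j)) :
    ∃ k : ℕ, 1 ≤ k ∧ k ≤ bndL m ∧ dist (F k) (F 0) = 0 := by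
  have hF0 : ∀ i j, dist (F i) (F j) = dist (F (i - j)) (F 0) := by
    intro i j
    have := hF (i - j) 0 j
    rw [← this]
    simp
  have hadd : ∀ r s : ℤ, dist (F (r + s)) (F 0) ≤ dist (F r) (F 0) + dist (F s) (F 0) := by
    intro r s
    have h := dist_triangle (F (r + s)) (F s) (F 0)
    rwa [hF0 (r + s) s, add_sub_cancel_right] at h
  have hneg : ∀ r : ℤ, dist (F (-r)) (F 0) = dist (F r) (F 0) := by
    intro r
    have h := hF0 0 r
    rw [zero_sub, dist_comm] at h
    exact h.symm
  let p : AddGroupSeminorm ZZ :=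
    { toFun := fun k => dist (F k) (F 0)
      map_zero' := dist_self (F 0)
      add_le' := hadd
      neg' := hneg }
  let _ : SeminormedAddCommGroup ZZ := p.toSeminormedAddCommGroup
  have hiso : Isometry (fun k : ZZ => F k) := Isometry.of_dist_eq fun x y => by
    rw [dist_eq_norm x y]
    exact hF0 x y
  obtain ⟨k, h1, h2, h3⟩ := semi_group_l1 (H := ZZ) X hX (fun k => F k) (fun k => hFX k) hiso
    (1 : ℤ)
  refine ⟨k, h1, h2, ?_⟩
  have h4 : dist (F (k • (1 : ℤ))) (F 0) = 0 := h3
  simpa using h4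

lemma orbit_close {m : ℕ} (X : Set (PiLp 1 fun _ : Fin m => ℝ)) (hX : IsCompact X)
    (M : X → X) (hM : LipschitzWith 1 M) (x : X) :
    ∃ k : ℕ, 1 ≤ k ∧ k ≤ bndL m ∧
      Tendsto (fun i => dist (M^[i + k] x) (M^[i] x)) atTop (𝓝 0) := by
  have hCS : CompactSpace X := isCompact_iff_compactSpace.1 hX
  let U : Ultrafilter ℕ := hyperfilter ℕ
  have hU : (U : Filter ℕ) ≤ atTop := by
    rw [← Nat.cofinite_eq_atTop]; exact hyperfilter_le_cofinite
  have hanti : ∀ k, Antitone (fun i => dist (M^[i + k] x) (M^[i] x)) := by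
    intro k
    refine antitone_nat_of_succ_le fun i => ?_
    have := hM.dist_le_mul (M^[i + k] x) (M^[i] x)
    rw [← Function.iterate_succ_apply' M, ← Function.iterate_succ_apply' M] at this
    simpa [Nat.succ_eq_add_one, add_right_comm] using this
  have hlim : ∀ k, ∃ d, Tendsto (fun i => dist (M^[i + k] x) (M^[i] x)) atTop (𝓝 d) := fun k =>
    ⟨_, tendsto_atTop_ciInf (hanti k) ⟨0, by rintro _ ⟨i, rfl⟩; exact dist_nonneg⟩⟩
  choose d hd using hlim
  have hex : ∀ k : ℤ, ∃ y : X, Tendsto (fun i : ℕ => M^[((i : ℤ) + k).toNat] x) U (𝓝 y) := by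
    intro k
    obtain ⟨y, -, hy⟩ := isCompact_univ.ultrafilter_le_nhds
      (U.map (fun i : ℕ => M^[((i : ℤ) + k).toNat] x)) (by simp)
    exact ⟨y, hy⟩
  choose F hF using hex
  have hshift : ∀ (j : ℤ) (n : ℕ), dist (F (j + n)) (F j) = d n := by
    intro j n
    have h1 := (hF (j + n)).dist (hF j)
    have hT : Tendsto (fun i : ℕ => ((i : ℤ) + j).toNat) atTop atTop := by
      refine tendsto_atTop.2 fun b => ?_
      filter_upwards [eventually_ge_atTop (b + j.natAbs)] with i hi
      omega
    have h2 := ((hd n).comp hT).mono_left hU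
    refine tendsto_nhds_unique h1 (h2.congr' ?_)
    have : ∀ᶠ i : ℕ in (U : Filter ℕ), j.natAbs ≤ i := hU (eventually_ge_atTop _)
    filter_upwards [this] with i hi
    have e : ((i : ℤ) + (j + n)).toNat = ((i : ℤ) + j).toNat + n := by omega
    simp only [Function.comp, e]
  have hinv : ∀ i j k, dist (F (i + k)) (F (j + k)) = dist (F i) (F j) := by
    have key : ∀ (j : ℤ) (n : ℕ) (k : ℤ), dist (F (j + n + k)) (F (j + k)) = dist (F (j + n)) (F j) := by
      intro j n k
      rw [hshift, add_right_comm, hshift]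
    intro i j k
    rcases le_total j i with h | h
    · obtain ⟨n, rfl⟩ := Int.le.dest h
      exact key j n k
    · obtain ⟨n, rfl⟩ := Int.le.dest h
      rw [dist_comm, key i n k, dist_comm]
  obtain ⟨k, h1, h2, h3⟩ := bi_orbit X hX (fun i => (F i : PiLp 1 fun _ : Fin m => ℝ))
    (fun i => (F i).2) hinv
  refine ⟨k, h1, h2, ?_⟩
  have h4 := hshift 0 k
  rw [zero_add] at h4
  have h5 : dist (F k) (F 0) = 0 := h3
  have := hd k
  rwa [← h4, h5] at this

lemma orbit_close_mul {α : Type*} [PseudoMetricSpace α] (M : α → α) (x : α) (k : ℕ)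
    (h : Tendsto (fun i => dist (M^[i + k] x) (M^[i] x)) atTop (𝓝 0)) (n : ℕ) :
    Tendsto (fun i => dist (M^[i + n * k] x) (M^[i] x)) atTop (𝓝 0) := by
  induction n with
  | zero => simp
  | succ n ih =>
    have h1 := h.comp (tendsto_add_atTop_nat (n * k))
    have h2 := h1.add ih
    rw [add_zero] at h2
    refine squeeze_zero (fun _ => dist_nonneg) (fun i => ?_) h2
    have e : i + (n + 1) * k = i + n * k + k := by ring
    rw [e]
    exact dist_triangle _ _ _

lemma orbit_conv {α : Type*} [MetricSpace α] [CompactSpace α] (M : α → α)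
    (hM : LipschitzWith 1 M) (x : α) (L : ℕ) (hL : 1 ≤ L)
    (h : Tendsto (fun i => dist (M^[i + L] x) (M^[i] x)) atTop (𝓝 0)) (l : ℕ) :
    ∃ y, Tendsto (fun t : ℕ => M^[t * L + l] x) atTop (𝓝 y) := by
  let U : Ultrafilter ℕ := hyperfilter ℕ
  have hU : (U : Filter ℕ) ≤ atTop := by
    rw [← Nat.cofinite_eq_atTop]; exact hyperfilter_le_cofinite
  obtain ⟨p, -, hp⟩ := isCompact_univ.ultrafilter_le_nhds
    (U.map (fun t : ℕ => M^[t * L + l] x)) (by simp)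
  have hp : Tendsto (fun t : ℕ => M^[t * L + l] x) U (𝓝 p) := hp
  have hML : LipschitzWith 1 (M^[L]) := by simpa using hM.iterate L
  have hs : ∀ t, M^[L] (M^[t * L + l] x) = M^[(t + 1) * L + l] x := by
    intro t
    rw [← Function.iterate_add_apply]
    have e : L + (t * L + l) = (t + 1) * L + l := by ring
    rw [e]
  have hfix : M^[L] p = p := by
    have h1 := ((hML.continuous.tendsto p).comp hp).dist hp
    have hT : Tendsto (fun t : ℕ => t * L + l) atTop atTop := by
      refine tendsto_atTop_mono (fun t => ?_) tendsto_id
      simp only [id]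
      nlinarith
    have h2 := (h.comp hT).mono_left hU
    refine dist_eq_zero.1 (tendsto_nhds_unique h1 (h2.congr fun t => ?_))
    have e : t * L + l + L = (t + 1) * L + l := by ring
    simp only [Function.comp, hs, e]
  refine ⟨p, ?_⟩
  have hanti : Antitone (fun t : ℕ => dist (M^[t * L + l] x) p) := by
    refine antitone_nat_of_succ_le fun t => ?_
    have := hML.dist_le_mul (M^[t * L + l] x) p
    rw [hfix, hs] at this
    simpa using this
  have h1 := tendsto_atTop_ciInf hanti ⟨0, by rintro _ ⟨i, rfl⟩; exact dist_nonneg⟩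
  have h2 := h1.mono_left hU
  have h3 := tendsto_iff_dist_tendsto_zero.1 hp
  rw [tendsto_nhds_unique h2 h3] at h1
  exact tendsto_iff_dist_tendsto_zero.2 h1

/-- For every `m ≥ 1` there is an integer `f(m) ≥ 1` such that for every nonempty compact subset
`X` of `ℝ^m` with the `ℓ¹` norm and every `1`-Lipschitz map `M : X → X`, there exist `L ≤ f(m)`
and maps `B₀, …, B_{L-1}` with `M^{tL + l} x → B_l x` as `t → ∞`, for every `l < L` and `x`. -/
theorem exists_uniform_period_for_one_lipschitz_maps (m : ℕ) (hm : 1 ≤ m) :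
    ∃ f : ℕ, 1 ≤ f ∧
      ∀ (X : Set (PiLp 1 fun _ : Fin m => ℝ)), X.Nonempty → IsCompact X →
        ∀ M : X → X, LipschitzWith 1 M →
          ∃ L : ℕ, 1 ≤ L ∧ L ≤ f ∧
            ∃ B : ℕ → X → X, ∀ l < L, ∀ x : X,
              Tendsto (fun t : ℕ => M^[t * L + l] x) atTop (𝓝 (B l x)) := by
  refine ⟨(bndL m).factorial, Nat.factorial_pos _, fun X _ hX M hM =>
    ⟨(bndL m).factorial, Nat.factorial_pos _, le_rfl, ?_⟩⟩
  have hCS : CompactSpace X := isCompact_iff_compactSpace.1 hX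
  have key : ∀ (l : ℕ) (x : X), ∃ y, Tendsto (fun t : ℕ => M^[t * (bndL m).factorial + l] x)
      atTop (𝓝 y) := by
    intro l x
    obtain ⟨k, h1, h2, h3⟩ := orbit_close X hX M hM x
    obtain ⟨n, hn⟩ := Nat.dvd_factorial h1 h2
    have h4 := orbit_close_mul M x k h3 n
    rw [mul_comm n k, ← hn] at h4
    exact orbit_conv M hM x _ (Nat.factorial_pos _) h4 l
  choose B hB using key
  exact ⟨B, fun l _ x => hB l x⟩
end
end

section
/- Let X, A and (Q_a)_{a ∈ A} be a commuting 1-Lipschitz family on a compact subset of ℝ^m with the ℓ¹ norm. For every x ∈ X, every a₀ ∈ A that is not cyclic at x, and every ε > 0, there exist an integer n and a finite set S ⊆ X such that: for every t ≥ n there exists x' ∈ S with ‖Q_{a₀}^{(t)}(x) − x'‖₁ ≤ ε; and every x' ∈ S satisfies C(x) ∪ {a₀} ⊆ C(x'), so in particular card C(x') ≥ card C(x) + 1. -/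
open Filter Topology

noncomputable section

/-- `a` is cyclic at `x` for the family `Q`: some positive iterate of `Q a` fixes `x`. -/
def Cyclic {X A : Type*} (Q : A → X → X) (a : A) (x : X) : Prop :=
  ∃ d : ℕ, 1 ≤ d ∧ (Q a)^[d] x = x

/-- The set of elements of `A` that are cyclic at `x`. -/
def cyclicSet {X A : Type*} (Q : A → X → X) (x : X) : Set A :=
  {a : A | Cyclic Q a x}

/-- `y` is reachable from `x`: `y` is obtained from `x` by applying finitely many of the maps. -/
def Reachable {X A : Type*} (Q : A → X → X) (x y : X) : Prop :=
  ∃ l : List A, y = l.foldr (fun a z => Q a z) x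

/-- The tight relation along a functional. -/
theorem tight_chain_exists {Θ : Type*} [Finite Θ] (φ : Θ → ℕ → ℝ) (ρ : ℕ → ℝ)
    (hle : ∀ θ i k, φ θ (i + k) - φ θ i ≤ ρ k)
    (hex : ∀ i k, ∃ θ, φ θ (i + k) - φ θ i = ρ k) :
    ∃ (θ : Θ) (g : ℕ → ℕ), StrictMono g ∧
      ∀ m n, m < n → φ θ (g n) - φ θ (g m) = ρ (g n - g m) := by
  classical
  have hsub : ∀ a b, ρ (a + b) ≤ ρ a + ρ b := by
    intro a b
    obtain ⟨θ, hθ⟩ := hex 0 (a + b)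
    have h1 := hle θ 0 a
    have h2 := hle θ (0 + a) b
    rw [← add_assoc] at hθ
    linarith
  let r : Θ → ℕ → ℕ → Prop := fun θ i j => i < j ∧ φ θ j - φ θ i = ρ (j - i)
  have htrans : ∀ θ, IsTrans ℕ (r θ) := by
    intro θ
    refine ⟨fun a b c hab hbc => ?_⟩
    obtain ⟨h1, h2⟩ := hab
    obtain ⟨h3, h4⟩ := hbc
    refine ⟨h1.trans h3, ?_⟩
    have h5 := hle θ a (c - a)
    rw [show a + (c - a) = c by omega] at h5
    have h6 := hsub (b - a) (c - b)
    rw [show b - a + (c - b) = c - a by omega] at h6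
    linarith
  by_contra hno
  push Not at hno
  have key : ∀ s : Finset Θ, ∃ g : ℕ → ℕ, StrictMono g ∧
      ∀ θ ∈ s, ∀ m n, m < n → ¬ r θ (g m) (g n) := by
    intro s
    induction s using Finset.induction_on with
    | empty => exact ⟨id, strictMono_id, by simp⟩
    | insert θ s _ ih =>
      obtain ⟨g, hg, hgs⟩ := ih
      have := htrans θ
      obtain ⟨e, he⟩ := exists_increasing_or_nonincreasing_subseq (r θ) g
      rcases he with he | he
      · exfalso
        obtain ⟨m, n, hmn, hne⟩ := hno θ (g ∘ e) (hg.comp e.strictMono)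
        exact hne (he m n hmn).2
      · refine ⟨g ∘ e, hg.comp e.strictMono, ?_⟩
        intro θ' hθ' m n hmn
        rcases Finset.mem_insert.1 hθ' with rfl | h
        · exact he m n hmn
        · exact hgs θ' h _ _ (e.strictMono hmn)
  have := Fintype.ofFinite Θ
  obtain ⟨g, hg, hgs⟩ := key Finset.univ
  have h01 : g 0 < g 1 := hg (by norm_num)
  obtain ⟨θ, hθ⟩ := hex (g 0) (g 1 - g 0)
  rw [show g 0 + (g 1 - g 0) = g 1 by omega] at hθ
  exact hgs θ (Finset.mem_univ _) 0 1 (by norm_num) ⟨h01, hθ⟩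

/-- Combinatorial core: a bounded homogeneous sequence for finitely many functionals is periodic. -/
theorem homogeneous_periodic {Θ : Type*} [Finite Θ] (φ : Θ → ℕ → ℝ) (ρ : ℕ → ℝ)
    (hle : ∀ θ i k, φ θ (i + k) - φ θ i ≤ ρ k)
    (hex : ∀ i k, ∃ θ, φ θ (i + k) - φ θ i = ρ k)
    (B : ℝ) (hB : ∀ k, ρ k ≤ B) : ∃ k, 1 ≤ k ∧ ρ k ≤ 0 := by
  classical
  by_contra hpos
  push Not at hpos
  have := Fintype.ofFinite Θ
  have hρ0 : ρ 0 = 0 := by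
    obtain ⟨θ, hθ⟩ := hex 0 0
    simpa using hθ.symm
  have hsub : ∀ a b, ρ (a + b) ≤ ρ a + ρ b := by
    intro a b
    obtain ⟨θ, hθ⟩ := hex 0 (a + b)
    have h1 := hle θ 0 a
    have h2 := hle θ (0 + a) b
    rw [← add_assoc] at hθ
    linarith
  have hsubL : ∀ L : List ℕ, ρ L.sum ≤ (L.map ρ).sum := by
    intro L
    induction L with
    | nil => simp [hρ0]
    | cons a L ih =>
      simp only [List.sum_cons, List.map_cons]
      linarith [hsub a L.sum]
  obtain ⟨θ₀, g, hg, hchain⟩ := tight_chain_exists φ ρ hle hex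
  let K := Fintype.card Θ
  let step : ℕ → ℕ := fun i => g (i + 1) - g i
  have hstep : ∀ i, 1 ≤ step i := fun i => by
    have : g i < g (i + 1) := hg (Nat.lt_succ_self i)
    simp only [step]; omega
  let L₀ : List ℕ := (List.range K).map step
  have hL₀ : ∀ k, (((List.range k).map step).map ρ).sum = φ θ₀ (g k) - φ θ₀ (g 0) ∧
      ((List.range k).map step).sum = g k - g 0 := by
    intro k
    induction k with
    | zero => simp
    | succ k ih =>
      have h1 : g k < g (k + 1) := hg (Nat.lt_succ_self k)
      have h2 : g 0 ≤ g k := hg.monotone (Nat.zero_le k)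
      have h3 := hchain k (k + 1) (Nat.lt_succ_self k)
      simp only [List.range_succ, List.map_append, List.sum_append, List.map_cons, List.map_nil,
        List.sum_cons, List.sum_nil, ih.1, ih.2, step]
      constructor
      · linarith
      · omega
  let good : List ℕ → Prop := fun L => (∀ a ∈ L, a ∈ L₀) ∧ (L.map ρ).sum ≤ ρ L.sum
  have hgood0 : good L₀ := by
    refine ⟨fun a h => h, ?_⟩
    obtain ⟨h1, h2⟩ := hL₀ K
    change (L₀.map ρ).sum = _ at h1
    change L₀.sum = _ at h2
    rw [h1, h2]
    have h3 := hle θ₀ (g 0) (g K - g 0)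
    rwa [show g 0 + (g K - g 0) = g K by
      have : g 0 ≤ g K := hg.monotone (Nat.zero_le K)
      omega] at h3
  have hL₀pos : ∀ a ∈ L₀, 0 < ρ a := by
    intro a ha
    obtain ⟨i, _, rfl⟩ := List.mem_map.1 ha
    exact hpos _ (hstep i)
  have hc : ∃ c : ℝ, 0 < c ∧ ∀ a ∈ L₀, c ≤ ρ a := by
    clear_value L₀
    clear hgood0 good
    induction L₀ with
    | nil => exact ⟨1, one_pos, by simp⟩
    | cons b L ih =>
      obtain ⟨c, hc, h⟩ := ih (fun a ha => hL₀pos a (List.mem_cons_of_mem _ ha))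
      refine ⟨min c (ρ b), lt_min hc (hL₀pos b List.mem_cons_self), ?_⟩
      intro a ha
      rcases List.mem_cons.1 ha with rfl | ha
      · exact min_le_right _ _
      · exact (min_le_left _ _).trans (h a ha)
  obtain ⟨c, hc0, hc⟩ := hc
  have hlen : ∀ L, good L → (L.length : ℝ) * c ≤ B := by
    intro L hL
    refine le_trans ?_ (hL.2.trans (hB _))
    have h := List.card_nsmul_le_sum (L.map ρ) c (by
      intro x hx
      obtain ⟨a, ha, rfl⟩ := List.mem_map.1 hx
      exact hc a (hL.1 a ha))
    simpa using h
  obtain ⟨M, hM⟩ := exists_nat_gt (B / c)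
  have hlenM : ∀ L, good L → L.length ≤ M := by
    intro L hL
    have h1 := hlen L hL
    have h2 : (L.length : ℝ) ≤ B / c := by rwa [le_div_iff₀ hc0]
    exact_mod_cast (h2.trans hM.le)
  -- a longest good list
  obtain ⟨L, hL, hLK, hmax⟩ : ∃ L, good L ∧ K ≤ L.length ∧
      ∀ L', good L' → L'.length ≤ L.length := by
    let P : ℕ → Prop := fun n => ∃ L, good L ∧ L.length = n
    have hP0 : P L₀.length := ⟨L₀, hgood0, rfl⟩
    obtain ⟨L, hL, hlenL⟩ : P (Nat.findGreatest P M) :=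
      Nat.findGreatest_spec (hlenM _ hgood0) hP0
    refine ⟨L, hL, ?_, ?_⟩
    · rw [hlenL]
      have : L₀.length = K := by simp [L₀]
      rw [← this]
      exact Nat.le_findGreatest (hlenM _ hgood0) hP0
    · intro L' hL'
      rw [hlenL]
      exact Nat.le_findGreatest (hlenM _ hL') ⟨L', hL', rfl⟩
  choose col hcol using fun i => hex i L.sum
  let p : Fin (L.length + 1) → Θ := fun j => col (L.take j).sum
  obtain ⟨i, j, hij, hpij⟩ : ∃ i j : Fin (L.length + 1), i < j ∧ p i = p j := by
    obtain ⟨i, j, hne, h⟩ := Fintype.exists_ne_map_eq_of_card_lt p (by simp; omega)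
    rcases lt_or_gt_of_ne hne with h' | h'
    · exact ⟨i, j, h', h⟩
    · exact ⟨j, i, h', h.symm⟩
  obtain ⟨i, hi⟩ := i
  obtain ⟨j, hj⟩ := j
  simp only [Fin.mk_lt_mk] at hij
  simp only [p] at hpij
  obtain ⟨d, rfl⟩ : ∃ d, j = i + d := ⟨j - i, by omega⟩
  set a := L.take i with ha
  set w := (L.drop i).take d with hw
  set b := L.drop (i + d) with hb
  have hsplit : L = a ++ (w ++ b) := by
    rw [ha, hw, hb, ← List.drop_drop, List.take_append_drop, List.take_append_drop]
  have htake : L.take (i + d) = a ++ w := by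
    rw [ha, hw, List.take_add]
  have hwlen : w.length = d := by
    rw [hw, List.length_take, List.length_drop]; omega
  have hsum : L.sum = a.sum + (w.sum + b.sum) := by
    conv_lhs => rw [hsplit]
    simp
  have hsumρ : (L.map ρ).sum = (a.map ρ).sum + ((w.map ρ).sum + (b.map ρ).sum) := by
    conv_lhs => rw [hsplit]
    simp
  have hgoodw : good (L ++ w) := by
    refine ⟨?_, ?_⟩
    · intro x hx
      rcases List.mem_append.1 hx with h | h
      · exact hL.1 x h
      · exact hL.1 x (by rw [hsplit]; simp [h])
    · have e1 := hcol a.sum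
      have e2 := hcol (L.take (i + d)).sum
      rw [← hpij, htake, List.sum_append] at e2
      set θ := col a.sum
      have e3 := hle θ (a.sum + w.sum) (b.sum + a.sum)
      rw [show a.sum + w.sum + (b.sum + a.sum) = a.sum + L.sum by rw [hsum]; ring] at e3
      have e4 := hle θ a.sum (L.sum + w.sum)
      rw [show a.sum + (L.sum + w.sum) = a.sum + w.sum + L.sum by ring] at e4
      have e5 := hsub b.sum a.sum
      have e6 := hsubL a
      have e7 := hsubL b
      have e8 := hL.2
      simp only [List.map_append, List.sum_append]
      linarith
  have := hmax _ hgoodw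
  rw [List.length_append, hwlen] at this
  omega

/-- The `ℓ¹` distance through sign functionals: upper bound. -/
theorem sign_sum_le_dist {m : ℕ} (u v : PiLp 1 fun _ : Fin m => ℝ) (s : Fin m → Bool) :
    (∑ i, (if s i then (1 : ℝ) else -1) * v i) - (∑ i, (if s i then (1 : ℝ) else -1) * u i)
      ≤ dist u v := by
  rw [dist_comm, PiLp.dist_eq_of_L1, ← Finset.sum_sub_distrib]
  refine Finset.sum_le_sum fun i _ => ?_
  rw [Real.dist_eq]
  split_ifs
  · linarith [le_abs_self (v i - u i)]
  · linarith [neg_abs_le (v i - u i)]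

theorem sign_sum_eq_dist {m : ℕ} (u v : PiLp 1 fun _ : Fin m => ℝ) : ∃ s : Fin m → Bool,
    (∑ i, (if s i then (1 : ℝ) else -1) * v i) - (∑ i, (if s i then (1 : ℝ) else -1) * u i)
      = dist u v := by
  refine ⟨fun i => decide (u i ≤ v i), ?_⟩
  rw [dist_comm, PiLp.dist_eq_of_L1, ← Finset.sum_sub_distrib]
  refine Finset.sum_congr rfl fun i _ => ?_
  rw [Real.dist_eq]
  by_cases h : u i ≤ v i
  · rw [abs_of_nonneg (by linarith)]; simp [h]
  · rw [abs_of_neg (by linarith)]; simp [h]; ring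

/-- Every orbit of a nonexpansive map has a periodic accumulation point. -/
theorem exists_periodic_cluster {m : ℕ} (X : Set (PiLp 1 fun _ : Fin m => ℝ)) (hXc : IsCompact X)
    (f : X → X) (hf : LipschitzWith 1 f) (x : X) :
    ∃ (y : X) (τ : ℕ → ℕ) (d : ℕ), Tendsto (fun n => f^[τ n] x) atTop (𝓝 y) ∧ 1 ≤ d ∧
      f^[d] y = y := by
  have : CompactSpace X := isCompact_iff_compactSpace.1 hXc
  obtain ⟨y, τ, hτ, hlim⟩ := CompactSpace.tendsto_subseq (fun n => f^[n] x)
  have hanti : ∀ k, Antitone fun t => dist (f^[t] x) (f^[t + k] x) := by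
    intro k
    refine antitone_nat_of_succ_le fun t => ?_
    rw [show t + 1 + k = (t + k) + 1 by ring, Function.iterate_succ_apply',
      Function.iterate_succ_apply']
    simpa using hf.dist_le_mul (f^[t] x) (f^[t + k] x)
  have hconv : ∀ k, ∃ l, Tendsto (fun t => dist (f^[t] x) (f^[t + k] x)) atTop (𝓝 l) :=
    fun k => ⟨_, tendsto_atTop_ciInf (hanti k) ⟨0, by rintro _ ⟨t, rfl⟩; exact dist_nonneg⟩⟩
  choose ρ hρ using hconv
  have hlimi : ∀ i, Tendsto (fun n => f^[τ n + i] x) atTop (𝓝 (f^[i] y)) := by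
    intro i
    have h := ((hf.continuous.iterate i).tendsto y).comp hlim
    refine h.congr fun n => ?_
    simp only [Function.comp_apply]
    rw [add_comm, Function.iterate_add_apply]
  have hdist : ∀ i k, dist (f^[i] y) (f^[i + k] y) = ρ k := by
    intro i k
    have h1 := (hlimi i).dist (hlimi (i + k))
    have h2 : Tendsto (fun n => τ n + i) atTop atTop :=
      tendsto_atTop_mono (fun n => Nat.le_add_right (τ n) i) hτ.tendsto_atTop
    have h3 := (hρ k).comp h2
    refine tendsto_nhds_unique h1 (h3.congr fun n => ?_)
    simp only [Function.comp_apply, add_assoc]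
  obtain ⟨d, hd, hd0⟩ := homogeneous_periodic (Θ := Fin m → Bool)
    (fun s t => ∑ i, (if s i then (1 : ℝ) else -1) * (f^[t] y : PiLp 1 fun _ : Fin m => ℝ) i) ρ
    (fun s i k => by
      rw [← hdist i k]
      exact sign_sum_le_dist _ _ s)
    (fun i k => by
      rw [← hdist i k]
      exact sign_sum_eq_dist _ _)
    (Metric.diam (Set.univ : Set X))
    (fun k => by
      rw [← hdist 0 k]
      exact Metric.dist_le_diam_of_mem isCompact_univ.isBounded (Set.mem_univ _) (Set.mem_univ _))
  refine ⟨y, τ, d, hlim, hd, ?_⟩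
  have h := hdist 0 d
  rw [zero_add, Function.iterate_zero_apply] at h
  exact (dist_le_zero.1 (h.trans_le hd0)).symm

/-- Iterating a non-cyclic map of a commuting `1`-Lipschitz family on a compact subset of `ℝ^m`
with the `ℓ¹` norm approaches a finite set of states at which strictly more maps are cyclic. -/
theorem iterate_noncyclic_approaches_more_cyclic
    {m : ℕ} {A : Type*} [Fintype A] [Nonempty A]
    (X : Set (PiLp 1 fun _ : Fin m => ℝ)) (hXne : X.Nonempty) (hXc : IsCompact X)
    (Q : A → X → X) (hLip : ∀ a, LipschitzWith 1 (Q a))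
    (hcomm : ∀ a b, Q a ∘ Q b = Q b ∘ Q a)
    (x : X) (a₀ : A) (ha₀ : ¬ Cyclic Q a₀ x) (ε : ℝ) (hε : 0 < ε) :
    ∃ (n : ℕ) (S : Set X), S.Finite ∧
      (∀ t ≥ n, ∃ x' ∈ S, dist ((Q a₀)^[t] x) x' ≤ ε) ∧
      (∀ x' ∈ S, insert a₀ (cyclicSet Q x) ⊆ cyclicSet Q x' ∧
        (cyclicSet Q x).ncard + 1 ≤ (cyclicSet Q x').ncard) := by
  classical
  obtain ⟨y, τ, d, hlim, hd, hper⟩ := exists_periodic_cluster X hXc (Q a₀) (hLip a₀) x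
  have hcomm' : ∀ a b, Function.Commute (Q a) (Q b) := fun a b z => congrFun (hcomm a b) z
  have hev : ∀ᶠ n in atTop, dist ((Q a₀)^[τ n] x) y < ε := (Metric.tendsto_nhds.1 hlim) ε hε
  obtain ⟨N, hN⟩ := hev.exists
  have hsub : ∀ j, insert a₀ (cyclicSet Q x) ⊆ cyclicSet Q ((Q a₀)^[j] y) := by
    intro j b hb
    rcases Set.mem_insert_iff.1 hb with rfl | ⟨e, he, hex⟩
    · refine ⟨d, hd, ?_⟩
      rw [← Function.iterate_add_apply, add_comm, Function.iterate_add_apply, hper]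
    · refine ⟨e, he, ?_⟩
      have hc : ∀ t, Function.Commute ((Q b)^[e]) ((Q a₀)^[t]) :=
        fun t => (hcomm' b a₀).iterate_iterate e t
      have hy : (Q b)^[e] y = y := by
        have h1 := ((((hLip b).continuous.iterate e).tendsto y).comp hlim)
        refine tendsto_nhds_unique (h1.congr fun n => ?_) hlim
        simp only [Function.comp_apply]
        rw [(hc (τ n)) x, hex]
      rw [(hc j) y, hy]
  refine ⟨τ N, (fun j => (Q a₀)^[j] y) '' (Set.Iio d), (Set.finite_Iio d).image _, ?_, ?_⟩
  · intro t ht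
    refine ⟨(Q a₀)^[(t - τ N) % d] y, ⟨_, Nat.mod_lt _ hd, rfl⟩, ?_⟩
    have hp : Function.IsPeriodicPt (Q a₀) d y := hper
    rw [hp.iterate_mod_apply]
    have h := ((hLip a₀).iterate (t - τ N)).dist_le_mul ((Q a₀)^[τ N] x) y
    rw [← Function.iterate_add_apply, Nat.sub_add_cancel ht] at h
    refine h.trans ?_
    simpa using hN.le
  · rintro _ ⟨j, _, rfl⟩
    refine ⟨hsub j, ?_⟩
    rw [← Set.ncard_insert_of_notMem (show a₀ ∉ cyclicSet Q x from ha₀) (Set.toFinite _)]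
    exact Set.ncard_le_ncard (hsub j) (Set.toFinite _)
end
end

section
/- Let X, A and (Q_a)_{a ∈ A} be a commuting 1-Lipschitz family on a compact subset of ℝ^m with the ℓ¹ norm. Then there exists a state x ∈ X at which every element of A is cyclic: for every a ∈ A there exists an integer d ≥ 1 with Q_a^{(d)}(x) = x. -/
open Filter Topology

noncomputable section

/-- Additive order: `x` lies on a geodesic from `0` to `g`. -/
def GeoLe {G : Type*} [NormedAddCommGroup G] (x g : G) : Prop :=
  ‖x‖ + ‖g - x‖ = ‖g‖

lemma geoLe_of_le {G : Type*} [NormedAddCommGroup G] {x g : G}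
    (h : ‖x‖ + ‖g - x‖ ≤ ‖g‖) : GeoLe x g := by
  refine le_antisymm h ?_
  have := norm_add_le x (g - x)
  simpa using this

lemma GeoLe.trans' {G : Type*} [NormedAddCommGroup G] {x g k : G}
    (h : GeoLe x g) (h' : GeoLe g k) : GeoLe x k := by
  apply geoLe_of_le
  unfold GeoLe at h h'
  have := norm_add_le (g - x) (k - g)
  have e : g - x + (k - g) = k - x := by abel
  rw [e] at this
  linarith

lemma exists_extremal {G : Type*} [NormedAddCommGroup G] [CompactSpace G] (g : G) :
    ∃ k : G, GeoLe g k ∧ ∀ h : G, h ≠ 0 → ‖k + h‖ < ‖k‖ + ‖h‖ := by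
  have hc : IsCompact {k : G | GeoLe g k} := by
    apply IsClosed.isCompact
    unfold GeoLe
    exact isClosed_eq (by fun_prop) (by fun_prop)
  obtain ⟨k, hk, hmax⟩ := hc.exists_isMaxOn ⟨g, by simp [GeoLe]⟩
    (f := fun k : G => ‖k‖) (by fun_prop)
  refine ⟨k, hk, fun h hh => ?_⟩
  refine lt_of_le_of_ne (norm_add_le _ _) fun he => ?_
  have h1 : GeoLe k (k + h) := by simp [GeoLe, he]
  have h2 : ‖k + h‖ ≤ ‖k‖ := hmax (GeoLe.trans' hk h1)
  have := norm_pos_iff.2 hh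
  linarith

section Core

variable {G : Type*} [NormedAddCommGroup G] {I : Type*}
  (f : I → G → ℝ)

lemma not_used (hf : ∀ i x y, f i x - f i y ≤ ‖x - y‖) {i : I} {g y h : G} (hs : ‖g + h‖ < ‖g‖ + ‖h‖)
    (h2 : f i (g + (h + y)) - f i (h + y) = ‖g‖) : f i (h + y) - f i y < ‖h‖ := by
  have := hf i (g + (h + y)) y
  have e : g + (h + y) - y = g + h := by abel
  rw [e] at this
  linarith

lemma used (hf : ∀ i x y, f i x - f i y ≤ ‖x - y‖) {i : I} {g y h : G} (hs : GeoLe h g)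
    (h2 : f i (g + y) - f i y = ‖g‖) : ‖h‖ ≤ f i (h + y) - f i y := by
  have := hf i (g + y) (h + y)
  have e : g + y - (h + y) = g - h := by abel
  rw [e] at this
  unfold GeoLe at hs
  linarith

lemma chain_bound (hf : ∀ i x y, f i x - f i y ≤ ‖x - y‖) [CompactSpace G] [Fintype I]
    (hn : ∀ x y, ∃ i, f i x - f i y = ‖x - y‖)
    (S : Finset G) (g : G)
    (hS : ∀ x ∈ S, ∀ y ∈ S, x ≠ y → GeoLe (x - y) g ∨ GeoLe (y - x) g) :
    S.card ≤ Fintype.card I := by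
  by_contra! hlt
  obtain ⟨k, hgk, hk⟩ := exists_extremal g
  have hn' : ∀ x : G, ∃ i, f i (k + -x) - f i (-x) = ‖k‖ := by
    intro x
    obtain ⟨i, hi⟩ := hn (k + -x) (-x)
    exact ⟨i, by simpa using hi⟩
  choose c hc using hn'
  obtain ⟨x, hx, y, hy, hxy, hcxy⟩ := Finset.exists_ne_map_eq_of_card_lt_of_maps_to
    (s := S) (t := Finset.univ) (f := c) (by simpa using hlt) (by intro x _; simp)
  have key : ∀ x y : G, x ≠ y → c x = c y → GeoLe (x - y) g → False := by
    intro x y hne hcc hle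
    have e : x - y + -x = -y := by abel
    have h1 := used f hf (GeoLe.trans' hle hgk) (hc x)
    have h2 := not_used f hf (i := c x) (g := k) (y := -x) (h := x - y)
      (hk _ (sub_ne_zero.2 hne)) (by rw [e, hcc]; exact hc y)
    linarith
  rcases hS x hx y hy hxy with h | h
  · exact key x y hxy hcxy h
  · exact key y x hxy.symm hcxy.symm h

lemma exists_local_extremal (hf : ∀ i x y, f i x - f i y ≤ ‖x - y‖) [CompactSpace G] [Fintype I]
    (hn : ∀ x y, ∃ i, f i x - f i y = ‖x - y‖)
    (r : ℝ) (g₀ : G) (hg₀ : g₀ ≠ 0) (hg₀r : ‖g₀‖ < r) :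
    ∃ g : G, g ≠ 0 ∧ ‖g‖ < r ∧ ∃ δ > 0, ∀ h : G, h ≠ 0 → ‖h‖ < δ →
      ‖g + h‖ < ‖g‖ + ‖h‖ := by
  classical
  by_contra! hcon
  have : ∀ N : ℕ, ∃ (S : Finset G) (g : G), S.card = N ∧ g ≠ 0 ∧ ‖g‖ < r ∧
      (∀ x ∈ S, GeoLe x g) ∧
      ∀ x ∈ S, ∀ y ∈ S, x ≠ y → GeoLe (x - y) g ∨ GeoLe (y - x) g := by
    intro N
    induction N with
    | zero => exact ⟨∅, g₀, by simp [hg₀, hg₀r]⟩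
    | succ N ih =>
      obtain ⟨S, g, hcard, hg, hgr, hle, hS⟩ := ih
      obtain ⟨h, hh, hhδ, hadd⟩ := hcon g hg hgr (r - ‖g‖) (by linarith)
      have hadd' : ‖g + h‖ = ‖g‖ + ‖h‖ := le_antisymm (norm_add_le _ _) hadd
      have hpos := norm_pos_iff.2 hh
      have hgg : GeoLe g (g + h) := by simp [GeoLe, hadd']
      have hnot : g + h ∉ S := by
        intro hm
        have h1 := hle _ hm
        unfold GeoLe at h1
        have := norm_nonneg (g - (g + h))
        linarith
      have hcomp : ∀ x ∈ S, GeoLe (g + h - x) (g + h) := by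
        intro x hx
        have h1 := (hle x hx).trans' hgg
        unfold GeoLe at h1 ⊢
        rw [sub_sub_cancel]
        linarith
      refine ⟨insert (g + h) S, g + h, ?_, ?_, ?_, ?_, ?_⟩
      · rw [Finset.card_insert_of_notMem hnot, hcard]
      · rw [← norm_pos_iff, hadd']
        have := norm_nonneg g
        linarith
      · linarith
      · intro x hx
        rcases Finset.mem_insert.1 hx with rfl | hx
        · simp [GeoLe]
        · exact (hle x hx).trans' hgg
      · intro x hx y hy hxy
        rcases Finset.mem_insert.1 hx with rfl | hx <;>
        rcases Finset.mem_insert.1 hy with rfl | hy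
        · exact absurd rfl hxy
        · exact Or.inl (hcomp y hy)
        · exact Or.inr (hcomp x hx)
        · rcases hS x hx y hy hxy with h | h
          · exact Or.inl (h.trans' hgg)
          · exact Or.inr (h.trans' hgg)
  obtain ⟨S, g, hcard, -, -, -, hS⟩ := this (Fintype.card I + 1)
  have := chain_bound f hf hn S g hS
  omega

theorem core (hf : ∀ i x y, f i x - f i y ≤ ‖x - y‖) [CompactSpace G] [Fintype I]
    (hn : ∀ x y, ∃ i, f i x - f i y = ‖x - y‖) : Finite G := by
  classical
  have hcont : ∀ i, Continuous (f i) := by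
    intro i
    refine (LipschitzWith.of_le_add_mul (K := 1) fun x y => ?_).continuous
    have := hf i x y
    rw [← dist_eq_norm] at this
    simp only [NNReal.coe_one, one_mul]
    linarith
  by_contra hinf
  have hsmall : ∀ r > 0, ∃ g : G, g ≠ 0 ∧ ‖g‖ < r := by
    by_contra! hcon
    obtain ⟨r, hr, hcon⟩ := hcon
    apply hinf
    have : DiscreteTopology G := by
      apply discreteTopology_of_isOpen_singleton_zero
      rw [Metric.isOpen_singleton_iff]
      refine ⟨r, hr, fun y hy => ?_⟩
      by_contra hy0
      have := hcon y hy0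
      rw [dist_zero_right] at hy
      linarith
    exact finite_of_compact_of_discrete
  have key : ∀ n : ℕ, ∀ J : Finset I, J.card = n → ∀ V : Set G, IsOpen V → V.Nonempty →
      (∀ x ∈ V, ∀ y ∈ V, x ≠ y → ∃ i ∈ J, f i x - f i y = ‖x - y‖) → False := by
    intro n
    induction n using Nat.strong_induction_on with
    | _ n ih =>
    intro J hJ V hV ⟨v, hv⟩ hJn
    obtain ⟨r, hr, hball⟩ := Metric.isOpen_iff.1 hV v hv
    obtain ⟨g₀, hg₀, hg₀r⟩ := hsmall (r / 2) (by positivity)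
    obtain ⟨g, hg, hgr, δ, hδ, hstrict⟩ := exists_local_extremal f hf hn (r / 2) g₀ hg₀ hg₀r
    let F : Option J → Set G := fun o => match o with
      | none => (Metric.ball v (r / 2))ᶜ
      | some i => {y | f i (g + y) - f i y = ‖g‖}
    have hFc : ∀ o, IsClosed (F o) := by
      intro o
      cases o with
      | none => exact Metric.isOpen_ball.isClosed_compl
      | some i =>
        have := hcont i
        exact isClosed_eq (by fun_prop) (by fun_prop)
    have hFu : ⋃ o, F o = Set.univ := by
      rw [Set.eq_univ_iff_forall]
      intro y
      by_cases hy : y ∈ Metric.ball v (r / 2)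
      · have hyV : y ∈ V := hball (Metric.ball_subset_ball (by linarith) hy)
        have hgyV : g + y ∈ V := by
          apply hball
          rw [Metric.mem_ball, dist_eq_norm] at hy ⊢
          have := norm_add_le g (y - v)
          rw [← add_sub_assoc] at this
          linarith
        obtain ⟨i, hi, he⟩ := hJn _ hgyV _ hyV (by simpa using hg)
        refine Set.mem_iUnion.2 ⟨some ⟨i, hi⟩, ?_⟩
        show f i (g + y) - f i y = ‖g‖
        simpa using he
      · exact Set.mem_iUnion.2 ⟨none, hy⟩
    have hd := dense_iUnion_interior_of_closed hFc hFu
    obtain ⟨w, hwb, hwF⟩ := hd.inter_open_nonempty (Metric.ball v (r / 2)) Metric.isOpen_ball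
      ⟨v, Metric.mem_ball_self (by positivity)⟩
    obtain ⟨o, ho⟩ := Set.mem_iUnion.1 hwF
    cases o with
    | none => exact (interior_subset ho) hwb
    | some i =>
      refine ih (J.erase i).card (by rw [← hJ]; exact Finset.card_erase_lt_of_mem i.2)
        (J.erase i) rfl
        (interior (F (some i)) ∩ Metric.ball v (r / 2) ∩ Metric.ball w (δ / 2))
        ((isOpen_interior.inter Metric.isOpen_ball).inter Metric.isOpen_ball)
        ⟨w, ⟨ho, hwb⟩, Metric.mem_ball_self (by positivity)⟩ ?_
      rintro x ⟨⟨hx1, hx2⟩, hx3⟩ y ⟨⟨hy1, hy2⟩, hy3⟩ hxy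
      obtain ⟨j, hj, he⟩ := hJn x (hball (Metric.ball_subset_ball (by linarith) hx2))
        y (hball (Metric.ball_subset_ball (by linarith) hy2)) hxy
      refine ⟨j, Finset.mem_erase.2 ⟨?_, hj⟩, he⟩
      rintro rfl
      have hxF' : x ∈ F (some i) := interior_subset hx1
      have hxF : f i (g + x) - f i x = ‖g‖ := hxF'
      have hlt : ‖x - y‖ < δ := by
        rw [← dist_eq_norm]
        rw [Metric.mem_ball] at hx3 hy3
        have := dist_triangle_right x y w
        linarith
      have := not_used f hf (i := (i : I)) (g := g) (y := y) (h := x - y)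
        (hstrict _ (sub_ne_zero.2 hxy) hlt) (by simpa using hxF)
      rw [sub_add_cancel] at this
      linarith
  exact key _ Finset.univ rfl Set.univ isOpen_univ ⟨0, trivial⟩
    (fun x _ y _ _ => by simpa using hn x y)

end Core

lemma finite_range_of_invariant {m : ℕ} {G : Type*} [AddCommGroup G]
    (X : Set (PiLp 1 fun _ : Fin m => ℝ)) (hXc : IsCompact X)
    (φ : G → PiLp 1 fun _ : Fin m => ℝ) (hφ : ∀ z, φ z ∈ X)
    (hinv : ∀ u v w, dist (φ (u + w)) (φ (v + w)) = dist (φ u) (φ v)) :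
    (Set.range φ).Finite := by
  have hsub : ∀ u v, dist (φ u) (φ v) = dist (φ (u - v)) (φ 0) := by
    intro u v
    have := hinv (u - v) 0 v
    simpa using this
  let N : AddGroupSeminorm G :=
    { toFun := fun z => dist (φ z) (φ 0)
      map_zero' := dist_self _
      add_le' := by
        intro x y
        have h1 := dist_triangle (φ (x + y)) (φ y) (φ 0)
        have h2 := hinv x 0 y
        rw [zero_add] at h2
        linarith
      neg' := by
        intro x
        have h2 := hinv (-x) 0 x
        rw [zero_add, neg_add_cancel] at h2
        rw [← h2, dist_comm] }
  let _ : SeminormedAddCommGroup G := N.toSeminormedAddCommGroup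
  have hiso : Isometry φ := by
    refine Isometry.of_dist_eq fun u v => ?_
    rw [hsub u v, dist_eq_norm u v]
    rfl
  let Φ : UniformSpace.Completion G → PiLp 1 fun _ : Fin m => ℝ :=
    UniformSpace.Completion.extension φ
  have hΦ : Isometry Φ := hiso.completion_extension
  have hΦe : ∀ z : G, Φ z = φ z := fun z =>
    UniformSpace.Completion.extension_coe hiso.uniformContinuous z
  have hΦX : ∀ z, Φ z ∈ X := by
    intro z
    induction z using UniformSpace.Completion.induction_on with
    | hp => exact hXc.isClosed.preimage hΦ.continuous
    | ih a => rw [hΦe]; exact hφ a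
  have : CompactSpace (UniformSpace.Completion G) := by
    constructor
    have h1 := hΦ.isClosedEmbedding.isCompact_preimage hXc
    have h2 : Φ ⁻¹' X = Set.univ := Set.eq_univ_of_forall hΦX
    rwa [h2] at h1
  have hnorm : ∀ x y, ‖x - y‖ = ∑ i, |Φ x i - Φ y i| := by
    intro x y
    rw [← dist_eq_norm, ← hΦ.dist_eq, dist_eq_norm, PiLp.norm_eq_of_L1]
    simp [Real.norm_eq_abs]
  have : Finite (UniformSpace.Completion G) := by
    refine core (I := Fin m → Bool)
      (fun s x => ∑ i, (if s i then (1 : ℝ) else -1) * Φ x i) ?_ ?_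
    · intro s x y
      rw [hnorm, ← Finset.sum_sub_distrib]
      refine Finset.sum_le_sum fun i _ => ?_
      rw [← mul_sub]
      split_ifs
      · rw [one_mul]; exact le_abs_self _
      · rw [neg_one_mul]; exact neg_le_abs _
    · intro x y
      refine ⟨fun i => decide (0 ≤ Φ x i - Φ y i), ?_⟩
      simp only [hnorm]
      rw [← Finset.sum_sub_distrib]
      refine Finset.sum_congr rfl fun i _ => ?_
      rw [← mul_sub]
      by_cases h : 0 ≤ Φ x i - Φ y i
      · simp only [h, decide_true, if_true, one_mul, abs_of_nonneg h]
      · simp only [h, decide_false, abs_of_neg (not_le.1 h)]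
        simp
  refine (Set.finite_range Φ).subset ?_
  rintro _ ⟨z, rfl⟩
  exact ⟨z, hΦe z⟩

lemma exists_orbit_nat {X A : Type*} [Fintype A] [DecidableEq A] [MetricSpace X]
    (Q : A → X → X) (hLip : ∀ a, LipschitzWith 1 (Q a))
    (hcomm : ∀ a b, Q a ∘ Q b = Q b ∘ Q a) :
    ∃ T : (A → ℕ) → X → X, (∀ u a, T (u + Pi.single a 1) = Q a ∘ T u) ∧
      (∀ u v, T (u + v) = T u ∘ T v) ∧ ∀ u, LipschitzWith 1 (T u) := by
  let q : A → Function.End X := Q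
  have hq : ∀ a b, Commute (q a) (q b) := fun a b => hcomm a b
  have hc : ∀ u v : A → ℕ, ∀ a b, Commute (q a ^ u a) (q b ^ v b) :=
    fun u v a b => (hq a b).pow_pow _ _
  let T : (A → ℕ) → Function.End X := fun u =>
    Finset.univ.noncommProd (fun a => q a ^ u a) (fun a _ b _ _ => hc u u a b)
  have hadd : ∀ u v, T (u + v) = T u * T v := by
    intro u v
    have := Finset.noncommProd_mul_distrib (s := Finset.univ) (fun a => q a ^ u a)
      (fun a => q a ^ v a) (fun a _ b _ _ => hc u u a b) (fun a _ b _ _ => hc v v a b)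
      (fun a _ b _ _ => hc v u a b)
    rw [← this]
    refine Finset.noncommProd_congr rfl (fun a _ => ?_) _
    exact pow_add _ _ _
  have hsingle : ∀ a, T (Pi.single a 1) = q a := by
    intro a
    refine (Finset.mul_noncommProd_erase Finset.univ (Finset.mem_univ a)
      (fun b => q b ^ (Pi.single a 1 : A → ℕ) b) (fun b _ c _ _ => hc _ _ b c)).symm.trans ?_
    refine (congrArg (q a ^ (Pi.single a 1 : A → ℕ) a * ·)
      (Finset.noncommProd_eq_pow_card _ _ _ (1 : Function.End X) ?_)).trans ?_
    swap
    · simp only [one_pow, mul_one, Pi.single_eq_same, pow_one]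
    intro b hb
    rw [Pi.single_eq_of_ne (Finset.ne_of_mem_erase hb), pow_zero]
  refine ⟨T, fun u a => ?_, hadd, fun u => ?_⟩
  · rw [add_comm, hadd, hsingle]; rfl
  · refine Finset.noncommProd_induction (s := Finset.univ) (fun a => q a ^ u a)
      (fun a _ b _ _ => hc u u a b) (fun g : Function.End X => LipschitzWith 1 g) ?_ ?_ ?_
    · intro a b ha hb
      have := LipschitzWith.comp ha hb
      rw [one_mul] at this
      exact this
    · exact LipschitzWith.id
    · intro a _
      have := (hLip a).iterate (u a)
      rw [one_pow] at this
      exact this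

/-- Invariant two-sided limiting orbit. -/
lemma exists_orbit {X A : Type*} [Fintype A] [DecidableEq A] [MetricSpace X] [CompactSpace X]
    [Nonempty X] (Q : A → X → X) (hLip : ∀ a, LipschitzWith 1 (Q a))
    (hcomm : ∀ a b, Q a ∘ Q b = Q b ∘ Q a) :
    ∃ φ : (A → ℤ) → X, (∀ z a, φ (z + Pi.single a 1) = Q a (φ z)) ∧
      ∀ u v w, dist (φ (u + w)) (φ (v + w)) = dist (φ u) (φ v) := by
  obtain ⟨T, hT1, hT2, hT3⟩ := exists_orbit_nat Q hLip hcomm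
  obtain ⟨x₀⟩ := ‹Nonempty X›
  let s : (A → ℤ) → ℕ → X := fun z n => T (fun a => (z a + n).toNat) x₀
  let U : Ultrafilter ℕ := hyperfilter ℕ
  have hU : (U : Filter ℕ) ≤ atTop := Nat.hyperfilter_le_atTop
  have hlim : ∀ z, ∃ x, Tendsto (s z) U (𝓝 x) := by
    intro z
    obtain ⟨x, -, hx⟩ := isCompact_univ.ultrafilter_le_nhds (U.map (s z)) (by simp)
    exact ⟨x, hx⟩
  choose φ hφ using hlim
  have hev : ∀ z : A → ℤ, ∃ N : ℕ, ∀ n ≥ N, ∀ a, 0 ≤ z a + n := by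
    intro z
    refine ⟨∑ a, (z a).natAbs, fun n hn a => ?_⟩
    have := Finset.single_le_sum (f := fun a => (z a).natAbs) (fun _ _ => Nat.zero_le _)
      (Finset.mem_univ a)
    omega
  -- adding a nonnegative vector
  have hs : ∀ (z : A → ℤ) (v : A → ℕ), ∃ N : ℕ, ∀ n ≥ N,
      s (z + fun a => (v a : ℤ)) n = T v (s z n) := by
    intro z v
    obtain ⟨N, hN⟩ := hev z
    refine ⟨N, fun n hn => ?_⟩
    have h1 : (fun a => ((z + fun a => (v a : ℤ)) a + n).toNat)
        = v + fun a => (z a + n).toNat := by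
      funext a
      have := hN n hn a
      simp only [Pi.add_apply]
      omega
    show T _ x₀ = T v (T _ x₀)
    rw [h1, hT2]
    rfl
  have hφT : ∀ (z : A → ℤ) (v : A → ℕ), φ (z + fun a => (v a : ℤ)) = T v (φ z) := by
    intro z v
    obtain ⟨N, hN⟩ := hs z v
    refine tendsto_nhds_unique (hφ _) ?_
    refine (((hT3 v).continuous.tendsto _).comp (hφ z)).congr' ?_
    filter_upwards [hU (eventually_ge_atTop N)] with n hn
    exact (hN n hn).symm
  have hmono : ∀ (z z' v : A → ℤ), (∀ a, 0 ≤ v a) →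
      dist (φ (z + v)) (φ (z' + v)) ≤ dist (φ z) (φ z') := by
    intro z z' v hv
    have h1 : v = fun a => (((v a).toNat : ℕ) : ℤ) := by
      funext a
      exact (Int.toNat_of_nonneg (hv a)).symm
    rw [h1, hφT, hφT]
    simpa using (hT3 (fun a => (v a).toNat)).dist_le_mul (φ z) (φ z')
  have hone : ∀ z z' : A → ℤ, dist (φ (z + fun _ => 1)) (φ (z' + fun _ => 1))
      = dist (φ z) (φ z') := by
    intro z z'
    obtain ⟨N, hN⟩ := hs z (fun _ => 1)
    obtain ⟨N', hN'⟩ := hs z' (fun _ => 1)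
    have hshift : ∀ (z : A → ℤ) n, s (z + fun _ => 1) n = s z (n + 1) := by
      intro z n
      show T _ x₀ = T _ x₀
      congr 1
      funext a
      simp only [Pi.add_apply]
      push_cast
      congr 1
      ring
    have hanti : Antitone fun n => dist (s z (n + (N + N'))) (s z' (n + (N + N'))) := by
      refine antitone_nat_of_succ_le fun n => ?_
      have e1 := hN (n + (N + N')) (by omega)
      have e2 := hN' (n + (N + N')) (by omega)
      simp only [Nat.cast_one] at e1 e2
      rw [hshift] at e1 e2
      rw [show n + 1 + (N + N') = n + (N + N') + 1 by ring, e1, e2]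
      simpa using (hT3 (fun _ => 1)).dist_le_mul (s z (n + (N + N'))) (s z' (n + (N + N')))
    have hL := tendsto_atTop_ciInf hanti ⟨0, by rintro _ ⟨n, rfl⟩; exact dist_nonneg⟩
    have hL' := (tendsto_add_atTop_iff_nat (f := fun n => dist (s z n) (s z' n)) (N + N')).1 hL
    have hL1 := (tendsto_add_atTop_iff_nat (f := fun n => dist (s z n) (s z' n)) 1).2 hL'
    have a1 := tendsto_nhds_unique ((hφ z).dist (hφ z')) (hL'.mono_left hU)
    have a2 := tendsto_nhds_unique ((hφ (z + fun _ => 1)).dist (hφ (z' + fun _ => 1)))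
      ((hL1.mono_left hU).congr fun n => by rw [hshift, hshift])
    rw [a1, a2]
  have hn : ∀ (n : ℕ) (z z' : A → ℤ), dist (φ (z + fun _ => (n : ℤ))) (φ (z' + fun _ => (n : ℤ)))
      = dist (φ z) (φ z') := by
    intro n
    induction n with
    | zero =>
      intro z z'
      have : (fun _ : A => ((0 : ℕ) : ℤ)) = 0 := by funext a; simp
      rw [this, add_zero, add_zero]
    | succ n ih =>
      intro z z'
      have : (fun _ : A => ((n + 1 : ℕ) : ℤ)) = (fun _ => (n : ℤ)) + fun _ => 1 := by
        funext a; simp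
      rw [this, ← add_assoc, ← add_assoc, hone, ih]
  refine ⟨φ, fun z a => ?_, fun u v w => le_antisymm ?_ ?_⟩
  · have h1 := hφT z (Pi.single a 1)
    have h2 : (fun b => ((Pi.single a 1 : A → ℕ) b : ℤ)) = Pi.single a 1 := by
      funext b
      by_cases h : b = a
      · subst h; simp
      · simp [h]
    have h3 : T (Pi.single a 1) (φ z) = Q a (φ z) := by
      have h4 := hφT z 0
      have h5 : (fun b => ((0 : A → ℕ) b : ℤ)) = 0 := by funext b; simp
      rw [h5, add_zero] at h4
      have h6 := hT1 0 a
      rw [zero_add] at h6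
      rw [h6, Function.comp_apply, ← h4]
    rw [h2, h3] at h1
    exact h1
  · obtain ⟨N, hN⟩ := hev w
    have := hmono (u - fun _ => (N : ℤ)) (v - fun _ => (N : ℤ)) (w + fun _ => (N : ℤ))
      (fun a => hN N le_rfl a)
    rw [← hn N (u - _), sub_add_cancel, sub_add_cancel, sub_add_add_cancel,
      sub_add_add_cancel] at this
    exact this
  · obtain ⟨N, hN⟩ := hev (-w)
    have := hmono (u + w) (v + w) (-w + fun _ => (N : ℤ)) (fun a => hN N le_rfl a)
    rw [add_assoc, add_neg_cancel_left, add_assoc, add_neg_cancel_left, hn] at this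
    exact this

/-- A commuting `1`-Lipschitz family on a nonempty compact subset of `ℝ^m` with the `ℓ¹` norm
admits a state at which every map of the family is cyclic. -/
theorem exists_state_all_cyclic
    {m : ℕ} {A : Type*} [Fintype A] [Nonempty A]
    (X : Set (PiLp 1 fun _ : Fin m => ℝ)) (hXne : X.Nonempty) (hXc : IsCompact X)
    (Q : A → X → X) (hLip : ∀ a, LipschitzWith 1 (Q a))
    (hcomm : ∀ a b, Q a ∘ Q b = Q b ∘ Q a) :
    ∃ x : X, ∀ a : A, Cyclic Q a x := by
  classical
  have : CompactSpace X := isCompact_iff_compactSpace.1 hXc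
  have : Nonempty X := hXne.to_subtype
  obtain ⟨φ, hQ, hinv⟩ := exists_orbit Q hLip hcomm
  have hfin := finite_range_of_invariant X hXc (fun z => (φ z : PiLp 1 fun _ : Fin m => ℝ))
    (fun z => (φ z).2) (fun u v w => hinv u v w)
  refine ⟨φ 0, fun a => ?_⟩
  have hit : ∀ n : ℕ, (Q a)^[n] (φ 0) = φ (n • Pi.single a 1) := by
    intro n
    induction n with
    | zero => simp
    | succ n ih => rw [Function.iterate_succ_apply', ih, ← hQ, succ_nsmul]
  obtain ⟨p, -, q, -, hpq, he⟩ := Set.infinite_univ.exists_lt_map_eq_of_mapsTo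
    (f := fun n : ℕ => (φ (n • Pi.single a 1) : PiLp 1 fun _ : Fin m => ℝ))
    (t := Set.range (fun z => (φ z : PiLp 1 fun _ : Fin m => ℝ)))
    (fun n _ => ⟨_, rfl⟩) hfin
  refine ⟨q - p, by omega, ?_⟩
  rw [hit]
  have h1 := hinv ((q - p) • Pi.single a 1) 0 (p • Pi.single a 1)
  rw [← add_nsmul, zero_add, Nat.sub_add_cancel hpq.le, Subtype.ext he, dist_self] at h1
  exact dist_eq_zero.1 h1.symm
end
end

section
/- Let X, A and (Q_a)_{a ∈ A} be a commuting 1-Lipschitz family on a compact subset of ℝ^m with the ℓ¹ norm. Let x₁ ∈ X, let k ≥ 1 be an integer with card C(x₁) ≥ k − 1, and let η > 0. Write Φ_k = {x ∈ X : card C(x) ≥ k}. Then the set {y ∈ X : y is reachable from x₁ and ‖y − x'‖₁ > η for every x' ∈ Φ_k} is finite. -/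
open Filter Topology

noncomputable section

structure Real1 {G I : Type*} [NormedAddCommGroup G] (φ : I → G → ℝ) : Prop where
  lip : ∀ i g h, φ i h - φ i g ≤ ‖h - g‖
  ex : ∀ g h, ∃ i, φ i h - φ i g = ‖h - g‖

theorem cover_aux {G I : Type*} [TopologicalSpace G] (C : I → Set G) (hC : ∀ i, IsClosed (C i))
    (s : Finset I) : ∀ U : Set G, IsOpen U → U.Nonempty → (∀ g ∈ U, ∃ i ∈ s, g ∈ C i) →
    ∃ i, ∃ V ⊆ U, IsOpen V ∧ V.Nonempty ∧ V ⊆ C i := by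
  classical
  induction s using Finset.induction_on with
  | empty =>
    intro U _ hne h
    obtain ⟨g, hg⟩ := hne
    obtain ⟨i, hi, _⟩ := h g hg
    simp at hi
  | insert a s _ ih =>
    intro U hU hne h
    by_cases hUC : U ⊆ C a
    · exact ⟨a, U, subset_rfl, hU, hne, hUC⟩
    · obtain ⟨g, hg, hga⟩ := Set.not_subset.1 hUC
      obtain ⟨i, V, hV, h1, h2, h3⟩ := ih (U \ C a) (hU.sdiff (hC a)) ⟨g, hg, hga⟩ (by
        intro g hg
        obtain ⟨i, hi, hgi⟩ := h g hg.1
        rcases Finset.mem_insert.1 hi with rfl | hi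
        · exact absurd hgi hg.2
        · exact ⟨i, hi, hgi⟩)
      exact ⟨i, V, hV.trans Set.sdiff_subset, h1, h2, h3⟩

theorem Real1.continuous {G I : Type*} [NormedAddCommGroup G] {φ : I → G → ℝ} (h : Real1 φ) (i : I) :
    Continuous (φ i) := by
  have : LipschitzWith 1 (φ i) := by
    apply LipschitzWith.of_dist_le_mul
    intro x y
    rw [Real.dist_eq, dist_eq_norm, NNReal.coe_one, one_mul, abs_le]
    have h1 := h.lip i x y
    have h2 := h.lip i y x
    rw [norm_sub_rev] at h1
    constructor <;> linarith
  exact this.continuous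

theorem local_max {G I : Type*} [NormedAddCommGroup G] [Finite I] {φ : I → G → ℝ} (h : Real1 φ)
    (T : G) (r : ℝ) (hr : 0 < r) (hT : ∀ t : G, ‖t‖ < r → ‖T + t‖ ≤ ‖T‖)
    (U : Set G) (hU : IsOpen U) (hUne : U.Nonempty) :
    ∃ i, ∃ V ⊆ U, IsOpen V ∧ V.Nonempty ∧ (∀ g ∈ V, ∀ g' ∈ V, φ i g = φ i g') ∧
      ∀ g ∈ V, φ i (g + T) = φ i g + ‖T‖ := by
  have := Fintype.ofFinite I
  obtain ⟨i, V, hVU, hV, ⟨g0, hg0⟩, hVC⟩ := cover_aux (fun i => {g | φ i (g + T) = φ i g + ‖T‖})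
    (fun i => isClosed_eq ((h.continuous i).comp (continuous_id.add continuous_const))
      ((h.continuous i).add continuous_const)) Finset.univ U hU hUne (by
      intro g _
      obtain ⟨i, hi⟩ := h.ex g (g + T)
      refine ⟨i, Finset.mem_univ _, ?_⟩
      simp only [add_sub_cancel_left] at hi
      simp only [Set.mem_ofPred_eq]
      linarith)
  have key : ∀ g ∈ V, ∀ g' ∈ V, dist g g' < r → φ i g ≤ φ i g' := by
    intro g hg g' _ hd
    have h1 : φ i (g + T) = φ i g + ‖T‖ := hVC hg
    have h2 := h.lip i g' (g + T)
    have h3 := hT (g - g') (by rwa [dist_eq_norm] at hd)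
    have h4 : g + T - g' = T + (g - g') := by abel
    rw [h4] at h2
    linarith
  refine ⟨i, V ∩ Metric.ball g0 (r / 2), Set.inter_subset_left.trans hVU,
    hV.inter Metric.isOpen_ball, ⟨g0, hg0, Metric.mem_ball_self (by positivity)⟩, ?_,
    fun g hg => hVC hg.1⟩
  rintro g ⟨hg, hgb⟩ g' ⟨hg', hgb'⟩
  rw [Metric.mem_ball] at hgb hgb'
  have hd : dist g g' < r := by
    have := dist_triangle_right g g' g0
    linarith
  exact le_antisymm (key g hg g' hg' hd) (key g' hg' g hg (by rwa [dist_comm]))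

theorem subsing_of_preconn {G I : Type*} [NormedAddCommGroup G] [Finite I] [CompactSpace G]
    [PreconnectedSpace G] {φ : I → G → ℝ} (h : Real1 φ) (g : G) : g = 0 := by
  obtain ⟨T, -, hT⟩ := isCompact_univ.exists_isMaxOn (f := fun g : G => ‖g‖) ⟨0, trivial⟩
    continuous_norm.continuousOn
  have hT' : ∀ t : G, ‖t‖ ≤ ‖T‖ := fun t => hT (Set.mem_univ t)
  have hcl : IsClosed {g : G | ‖g‖ = ‖T‖} := isClosed_eq continuous_norm continuous_const
  have hop : IsOpen {g : G | ‖g‖ = ‖T‖} := by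
    rw [Metric.isOpen_iff]
    intro S hS
    simp only [Set.mem_ofPred_eq] at hS
    obtain ⟨i, V, -, hV, ⟨g0, hg0⟩, hc, hs⟩ := local_max h S 1 one_pos
      (fun t _ => by rw [hS]; exact hT' _) Set.univ isOpen_univ ⟨0, trivial⟩
    obtain ⟨ε, hε, hb⟩ := Metric.isOpen_iff.1 hV g0 hg0
    refine ⟨ε, hε, fun S' hS' => ?_⟩
    have hm : g0 + (S' - S) ∈ V := hb (by
      rw [Metric.mem_ball, dist_eq_norm] at *
      simpa using hS')
    have h1 := hs _ hm
    have h2 := hc _ hm _ hg0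
    have h3 := h.lip i g0 (g0 + (S' - S) + S)
    have h4 : g0 + (S' - S) + S - g0 = S' := by abel
    rw [h4] at h3
    exact le_antisymm (hT' _) (by rw [← hS]; linarith)
  have huniv : {g : G | ‖g‖ = ‖T‖} = Set.univ := IsClopen.eq_univ ⟨hcl, hop⟩ ⟨T, rfl⟩
  have h0 : (0 : G) ∈ {g : G | ‖g‖ = ‖T‖} := huniv ▸ trivial
  have hg : g ∈ {g : G | ‖g‖ = ‖T‖} := huniv ▸ trivial
  simp only [Set.mem_ofPred_eq, norm_zero] at h0 hg
  exact norm_eq_zero.1 (by rw [hg, ← h0])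

theorem shrink_aux {G I : Type*} [TopologicalSpace G] [Nonempty G] (φ : I → G → ℝ) (s : Finset I) :
    ∃ U : Set G, IsOpen U ∧ U.Nonempty ∧ ∀ i ∈ s, (∃ V ⊆ U, IsOpen V ∧ V.Nonempty ∧
      ∀ g ∈ V, ∀ g' ∈ V, φ i g = φ i g') → ∀ g ∈ U, ∀ g' ∈ U, φ i g = φ i g' := by
  classical
  induction s using Finset.induction_on with
  | empty => exact ⟨Set.univ, isOpen_univ, Set.univ_nonempty, by simp⟩
  | insert a s _ ih =>
    obtain ⟨U, hU, hne, h⟩ := ih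
    by_cases hc : ∃ V ⊆ U, IsOpen V ∧ V.Nonempty ∧ ∀ g ∈ V, ∀ g' ∈ V, φ a g = φ a g'
    · obtain ⟨V, hVU, hV, hVne, hVc⟩ := hc
      refine ⟨V, hV, hVne, fun i hi => ?_⟩
      rcases Finset.mem_insert.1 hi with rfl | hi
      · exact fun _ => hVc
      · rintro ⟨W, hW, h1⟩ g hg g' hg'
        exact h i hi ⟨W, hW.trans hVU, h1⟩ g (hVU hg) g' (hVU hg')
    · refine ⟨U, hU, hne, fun i hi => ?_⟩
      rcases Finset.mem_insert.1 hi with rfl | hi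
      · exact fun hh => absurd hh hc
      · exact h i hi

theorem finite_of_td {G I : Type*} [NormedAddCommGroup G] [Finite I] [CompactSpace G]
    [TotallyDisconnectedSpace G] {φ : I → G → ℝ} (h : Real1 φ) : Finite G := by
  have := Fintype.ofFinite I
  obtain ⟨U, hU, ⟨g0, hg0⟩, hUc⟩ := shrink_aux φ Finset.univ
  obtain ⟨r, hr, hb⟩ := Metric.isOpen_iff.1 hU g0 hg0
  obtain ⟨V, hV, h0V, hVb⟩ := compact_exists_isClopen_in_isOpen
    (Metric.isOpen_ball (x := (0 : G)) (ε := r / 2)) (Metric.mem_ball_self (by positivity))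
  obtain ⟨T, hTV, hT⟩ := hV.isClosed.isCompact.exists_isMaxOn (f := fun g : G => ‖g‖) ⟨0, h0V⟩
    continuous_norm.continuousOn
  have hT' : ∀ t ∈ V, ‖t‖ ≤ ‖T‖ := fun t ht => hT ht
  by_cases hT0 : T = 0
  · have hV0 : V = {0} := by
      ext t
      refine ⟨fun ht => ?_, fun ht => by rw [Set.mem_singleton_iff.1 ht]; exact h0V⟩
      have := hT' t ht
      rw [hT0, norm_zero] at this
      exact norm_le_zero_iff.1 this
    have : DiscreteTopology G := discreteTopology_of_isOpen_singleton_zero (hV0 ▸ hV.isOpen)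
    exact finite_of_compact_of_discrete
  · exfalso
    obtain ⟨δ, hδ, hbV⟩ := Metric.isOpen_iff.1 hV.isOpen T hTV
    obtain ⟨i, W, hWb, hW, ⟨g, hg⟩, hc, hs⟩ := local_max h T δ hδ
      (fun t ht => hT' _ (hbV (by simpa [Metric.mem_ball, dist_eq_norm] using ht)))
      (Metric.ball g0 (r / 2)) Metric.isOpen_ball ⟨g0, Metric.mem_ball_self (by positivity)⟩
    have hsub : Metric.ball g0 (r / 2) ⊆ U :=
      (Metric.ball_subset_ball (by linarith)).trans hb
    have hcU := hUc i (Finset.mem_univ i) ⟨W, hWb.trans hsub, hW, ⟨g, hg⟩, hc⟩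
    have hgT : g + T ∈ U := hb (by
      have h1 := hWb hg
      have h2 := hVb hTV
      rw [Metric.mem_ball, dist_eq_norm] at *
      have h3 := norm_add_le (g - g0) (T - 0)
      have h4 : g + T - g0 = (g - g0) + (T - 0) := by abel
      rw [h4]; linarith)
    have h1 := hcU g (hsub (hWb hg)) _ hgT
    have h2 := hs g hg
    exact hT0 (norm_eq_zero.1 (by linarith))

theorem finite_of_real1 {G I : Type*} [NormedAddCommGroup G] [Finite I] [CompactSpace G]
    {φ : I → G → ℝ} (h : Real1 φ) : Finite G := by
  let K : AddSubgroup G := AddSubgroup.connectedComponentOfZero G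
  have hKs : (K : Set G) = connectedComponent 0 := rfl
  have : CompactSpace K := isCompact_iff_compactSpace.1
    (by rw [hKs]; exact isClosed_connectedComponent.isCompact)
  have : PreconnectedSpace K := isPreconnected_iff_preconnectedSpace.1
    (by rw [hKs]; exact isPreconnected_connectedComponent)
  have hK : Real1 (fun i (g : K) => φ i g) :=
    ⟨fun i g h' => h.lip i g h', fun g h' => h.ex g h'⟩
  have hK0 : ∀ g ∈ connectedComponent (0 : G), g = 0 := by
    intro g hg
    have := subsing_of_preconn hK ⟨g, hg⟩
    exact congrArg Subtype.val this
  have : TotallyDisconnectedSpace G := by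
    rw [totallyDisconnectedSpace_iff_connectedComponent_singleton]
    intro x
    refine Set.Subset.antisymm (fun y hy => ?_) (by simpa using mem_connectedComponent)
    have h1 := (isPreconnected_connectedComponent (x := x)).image (fun z => z - x)
      (by fun_prop)
    have h2 := h1.subset_connectedComponent (x := 0) ⟨x, mem_connectedComponent, by simp⟩
    have h3 := hK0 _ (h2 ⟨y, hy, rfl⟩)
    exact sub_eq_zero.1 h3
  exact finite_of_td h

theorem finite_of_isometry {m : ℕ} {G : Type*} [NormedAddCommGroup G] [CompactSpace G]
    (Φ : G → PiLp 1 fun _ : Fin m => ℝ) (hΦ : Isometry Φ) : Finite G := by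
  have hd : ∀ g h, ‖h - g‖ = ∑ j, |Φ h j - Φ g j| := by
    intro g h
    rw [← dist_eq_norm, ← hΦ.dist_eq, PiLp.dist_eq_of_L1]
    simp [Real.dist_eq]
  refine finite_of_real1 (I := Fin m → Bool)
    (φ := fun s g => ∑ j, (if s j then Φ g j else - Φ g j)) ⟨?_, ?_⟩
  · intro s g h
    rw [hd, ← Finset.sum_sub_distrib]
    refine Finset.sum_le_sum fun j _ => ?_
    split_ifs
    · exact le_abs_self _
    · have := neg_abs_le (Φ h j - Φ g j)
      linarith
  · intro g h
    refine ⟨fun j => decide (0 ≤ Φ h j - Φ g j), ?_⟩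
    rw [hd, ← Finset.sum_sub_distrib]
    refine Finset.sum_congr rfl fun j _ => ?_
    by_cases hj : 0 ≤ Φ h j - Φ g j
    · simp only [hj, decide_true, if_true, abs_of_nonneg]
    · simp only [hj, decide_false, abs_of_neg (not_le.1 hj)]
      simp; ring


theorem finite_range_of_invariant_s9 {m : ℕ} {Z : Type*} [AddCommGroup Z]
    (X : Set (PiLp 1 fun _ : Fin m => ℝ)) (hX : IsCompact X)
    (y : Z → PiLp 1 fun _ : Fin m => ℝ) (hyX : ∀ a, y a ∈ X)
    (hy : ∀ a b c, dist (y (a + c)) (y (b + c)) = dist (y a) (y b)) :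
    (Set.range y).Finite := by
  let p : AddGroupSeminorm Z :=
    { toFun := fun a => dist (y a) (y 0)
      map_zero' := dist_self _
      add_le' := fun a b => by
        have h1 := dist_triangle (y (a + b)) (y b) (y 0)
        have h2 := hy a 0 b
        rw [zero_add] at h2
        linarith
      neg' := fun a => by
        have h2 := hy (-a) 0 a
        rw [zero_add, neg_add_cancel, dist_comm] at h2
        exact h2.symm }
  let _ : SeminormedAddCommGroup Z := p.toSeminormedAddCommGroup
  have hn : ∀ a : Z, ‖a‖ = dist (y a) (y 0) := fun a => rfl
  have hiso : Isometry y := by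
    apply Isometry.of_dist_eq
    intro a b
    rw [dist_eq_norm a b, hn, ← hy (a - b) 0 b]
    simp
  have htb : TotallyBounded (Set.univ : Set Z) := by
    have h1 := totallyBounded_preimage hiso.isUniformInducing hX.totallyBounded
    refine h1.subset fun a _ => hyX a
  have hcpt : CompactSpace (UniformSpace.Completion Z) := by
    constructor
    have h1 := htb.image (UniformSpace.Completion.uniformContinuous_coe Z)
    have h2 := h1.closure
    rw [Set.image_univ, UniformSpace.Completion.denseRange_coe.closure_range] at h2
    exact isCompact_iff_totallyBounded_isComplete.2 ⟨h2, isComplete_univ⟩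
  have hfin := finite_of_isometry _ hiso.completion_extension
  refine (Set.finite_range (UniformSpace.Completion.extension y)).subset ?_
  rintro _ ⟨a, rfl⟩
  exact ⟨a, UniformSpace.Completion.extension_coe hiso.uniformContinuous a⟩

theorem exists_periodic {m : ℕ} (X : Set (PiLp 1 fun _ : Fin m => ℝ)) (hX : IsCompact X)
    (f : X → X) (hf : LipschitzWith 1 f) (x : X) :
    ∃ z ∈ closure (Set.range fun n => f^[n] x), ∃ d : ℕ, 1 ≤ d ∧ f^[d] z = z := by
  have : CompactSpace X := isCompact_iff_compactSpace.1 hX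
  let 𝒰 : Ultrafilter ℕ := hyperfilter ℕ
  have h𝒰 : (𝒰 : Filter ℕ) ≤ atTop := Nat.hyperfilter_le_atTop
  let u : ℤ → ℕ → X := fun n k => f^[((k : ℤ) + n).toNat] x
  let y : ℤ → X := fun n => (𝒰.map (u n)).lim
  have hy : ∀ n, Tendsto (u n) 𝒰 (𝓝 (y n)) := fun n => (𝒰.map (u n)).le_nhds_lim
  have hdist : ∀ a b : ℤ, ∃ L, Tendsto (fun k => dist (u a k) (u b k)) atTop (𝓝 L) := by
    intro a b
    let N : ℕ := a.natAbs + b.natAbs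
    have hanti : Antitone (fun k => dist (u a (k + N)) (u b (k + N))) := by
      apply antitone_nat_of_succ_le
      intro k
      have e : ∀ c : ℤ, c.natAbs ≤ N → u c (k + 1 + N) = f (u c (k + N)) := by
        intro c hc
        change f^[_] x = f (f^[_] x)
        rw [← Function.iterate_succ_apply' f]
        congr 1
        push_cast
        omega
      rw [e a (by omega), e b (by omega)]
      simpa using hf.dist_le_mul (u a (k + N)) (u b (k + N))
    have hbdd : BddBelow (Set.range fun k => dist (u a (k + N)) (u b (k + N))) :=
      ⟨0, by rintro _ ⟨k, rfl⟩; exact dist_nonneg⟩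
    exact ⟨_, (tendsto_add_atTop_iff_nat N).1 (tendsto_atTop_ciInf hanti hbdd)⟩
  have hinv : ∀ a b c, dist (y (a + c)) (y (b + c)) = dist (y a) (y b) := by
    intro a b c
    obtain ⟨L, hL⟩ := hdist a b
    have h1 : dist (y a) (y b) = L :=
      tendsto_nhds_unique ((hy a).dist (hy b)) (hL.mono_left h𝒰)
    have hs : Tendsto (fun k : ℕ => ((k : ℤ) + c).toNat) atTop atTop := by
      refine tendsto_atTop.2 fun M => ?_
      filter_upwards [eventually_ge_atTop (M + c.natAbs)] with k hk
      omega
    have h2 : Tendsto (fun k => dist (u (a + c) k) (u (b + c) k)) atTop (𝓝 L) := by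
      refine (hL.comp hs).congr' ?_
      filter_upwards [eventually_ge_atTop c.natAbs] with k hk
      have e : ∀ d : ℤ, u d (((k : ℤ) + c).toNat) = u (d + c) k := by
        intro d
        change f^[_] x = f^[_] x
        congr 1
        congr 1
        omega
      simp only [Function.comp_apply, e]
    rw [h1]
    exact tendsto_nhds_unique ((hy _).dist (hy _)) (h2.mono_left h𝒰)
  have hiter : ∀ n : ℕ, f^[n] (y 0) = y n := by
    intro n
    have hc : Continuous f^[n] := hf.continuous.iterate n
    refine tendsto_nhds_unique ((hc.tendsto _).comp (hy 0)) ((hy n).congr fun k => ?_)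
    change f^[_] x = f^[n] (f^[_] x)
    rw [← Function.iterate_add_apply]
    congr 1
    omega
  have hfin := finite_range_of_invariant_s9 X hX (fun n => (y n : PiLp 1 fun _ : Fin m => ℝ))
    (fun n => (y n).2) (fun a b c => hinv a b c)
  refine ⟨y 0, ?_, ?_⟩
  · exact mem_closure_of_tendsto (hy 0) (Eventually.of_forall fun k => ⟨_, rfl⟩)
  · have hni : ¬ Function.Injective (fun n : ℕ => (y n : PiLp 1 fun _ : Fin m => ℝ)) := by
      intro hinj
      exact Set.infinite_range_of_injective hinj
        (hfin.subset (by rintro _ ⟨n, rfl⟩; exact ⟨(n : ℤ), rfl⟩))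
    have key : ∀ a b : ℕ, a < b → y a = y b → ∃ d : ℕ, 1 ≤ d ∧ f^[d] (y 0) = y 0 := by
      intro a b hab h
      refine ⟨b - a, by omega, ?_⟩
      rw [hiter]
      have h1 := hinv ((b - a : ℕ) : ℤ) 0 a
      rw [zero_add, show ((b - a : ℕ) : ℤ) + a = b by omega, h, dist_self] at h1
      exact dist_eq_zero.1 h1.symm
    rw [Function.Injective] at hni
    push Not at hni
    obtain ⟨a, b, h, hab⟩ := hni
    have h' : y a = y b := Subtype.ext h
    rcases lt_or_gt_of_ne hab with h1 | h1
    · exact key a b h1 h'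
    · exact key b a h1 h'.symm

theorem cyclic_foldr {X A : Type*} (Q : A → X → X) (hcomm : ∀ a b, Q a ∘ Q b = Q b ∘ Q a)
    (l : List A) (z : X) :
    cyclicSet Q z ⊆ cyclicSet Q (l.foldr (fun a z => Q a z) z) := by
  induction l with
  | nil => exact subset_rfl
  | cons b l ih =>
    intro a ha
    obtain ⟨d, hd, h⟩ := ih ha
    refine ⟨d, hd, ?_⟩
    have hc : Function.Commute (Q a) (Q b) := fun x => congrFun (hcomm a b) x
    rw [List.foldr_cons]
    have := (hc.iterate_left d) (l.foldr (fun a z => Q a z) z)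
    rw [this, h]

theorem lip_foldr {X A : Type*} [PseudoMetricSpace X] (Q : A → X → X)
    (hLip : ∀ a, LipschitzWith 1 (Q a)) (l : List A) (z w : X) :
    dist (l.foldr (fun a z => Q a z) z) (l.foldr (fun a z => Q a z) w) ≤ dist z w := by
  induction l with
  | nil => exact le_rfl
  | cons b l ih =>
    rw [List.foldr_cons, List.foldr_cons]
    refine le_trans ?_ ih
    simpa using (hLip b).dist_le_mul (l.foldr (fun a z => Q a z) z) (l.foldr (fun a z => Q a z) w)

theorem foldr_extract {X A : Type*} [DecidableEq A] (Q : A → X → X)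
    (hcomm : ∀ a b, Q a ∘ Q b = Q b ∘ Q a) (a : A) (x : X) (n : ℕ) :
    ∀ l : List A, n ≤ l.count a → ∃ l' : List A, l'.length + n = l.length ∧
      l.foldr (fun a z => Q a z) x = l'.foldr (fun a z => Q a z) ((Q a)^[n] x) := by
  induction n generalizing x with
  | zero => exact fun l _ => ⟨l, rfl, rfl⟩
  | succ n ih =>
    intro l hl
    have hm : a ∈ l := List.count_pos_iff.1 (by omega)
    have hp : l.Perm (l.erase a ++ [a]) :=
      (List.perm_cons_erase hm).trans (List.perm_append_singleton a _).symm
    obtain ⟨l', h1, h2⟩ := ih (Q a x) (l.erase a) (by rw [List.count_erase_self]; omega)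
    refine ⟨l', ?_, ?_⟩
    · rw [List.length_erase_of_mem hm] at h1
      have := List.length_pos_of_mem hm
      omega
    · have hlc : LeftCommutative (fun a z => Q a z : A → X → X) :=
        ⟨fun b c z => congrFun (hcomm b c) z⟩
      rw [hp.foldr_eq, List.foldr_append]
      simpa using h2

/-- For a commuting `1`-Lipschitz family on a compact subset of `ℝ^m` with the `ℓ¹` norm:
if `card C(x₁) ≥ k - 1`, the set of states reachable from `x₁` staying at `ℓ¹`-distance more
than `η` from every state with at least `k` cyclic maps is finite. -/
theorem far_reachable_set_finite
    {m : ℕ} {A : Type*} [Fintype A] [Nonempty A]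
    (X : Set (PiLp 1 fun _ : Fin m => ℝ)) (hXne : X.Nonempty) (hXc : IsCompact X)
    (Q : A → X → X) (hLip : ∀ a, LipschitzWith 1 (Q a))
    (hcomm : ∀ a b, Q a ∘ Q b = Q b ∘ Q a)
    (x₁ : X) (k : ℕ) (hk : 1 ≤ k) (hx₁ : k - 1 ≤ (cyclicSet Q x₁).ncard)
    (η : ℝ) (hη : 0 < η) :
    {y : X | Reachable Q x₁ y ∧
      ∀ x' : X, k ≤ (cyclicSet Q x').ncard → η < dist y x'}.Finite := by
  classical
  set S := {y : X | Reachable Q x₁ y ∧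
      ∀ x' : X, k ≤ (cyclicSet Q x').ncard → η < dist y x'} with hS
  -- each letter need only be used boundedly often
  have hN : ∀ a : A, ∃ N : ℕ, 1 ≤ N ∧ ∀ l : List A, l.foldr (fun a z => Q a z) x₁ ∈ S →
      N ≤ l.count a → ∃ l' : List A, l'.length < l.length ∧
        l.foldr (fun a z => Q a z) x₁ = l'.foldr (fun a z => Q a z) x₁ := by
    intro a
    by_cases ha : a ∈ cyclicSet Q x₁
    · obtain ⟨d, hd, h⟩ := ha
      refine ⟨d, hd, fun l _ hl => ?_⟩
      obtain ⟨l', h1, h2⟩ := foldr_extract Q hcomm a x₁ d l hl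
      exact ⟨l', by omega, by rw [h2, h]⟩
    · obtain ⟨z, hz, d, hd, hdz⟩ := exists_periodic X hXc (Q a) (hLip a) x₁
      obtain ⟨n, hn⟩ := Metric.mem_closure_range_iff.1 hz η hη
      have hsub : insert a (cyclicSet Q x₁) ⊆ cyclicSet Q z := by
        intro b hb
        rcases hb with rfl | ⟨e, he, hb⟩
        · exact ⟨d, hd, hdz⟩
        · refine ⟨e, he, ?_⟩
          have hcl : IsClosed {w : X | (Q b)^[e] w = w} :=
            isClosed_eq ((hLip b).continuous.iterate e) continuous_id
          refine closure_minimal ?_ hcl hz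
          rintro _ ⟨j, rfl⟩
          have hc : Function.Commute (Q b) (Q a) := fun x => congrFun (hcomm b a) x
          have h3 := ((hc.iterate_left e).iterate_right j) x₁
          rw [hb] at h3
          exact h3
      have hcard : k ≤ (cyclicSet Q z).ncard := by
        have h1 := Set.ncard_le_ncard hsub (Set.toFinite _)
        rw [Set.ncard_insert_of_notMem ha (Set.toFinite _)] at h1
        omega
      refine ⟨n + 1, by omega, fun l hlS hl => ?_⟩
      exfalso
      obtain ⟨l', h1, h2⟩ := foldr_extract Q hcomm a x₁ n l (by omega)
      have h3 := hlS.2 (l'.foldr (fun a z => Q a z) z)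
        (hcard.trans (Set.ncard_le_ncard (cyclic_foldr Q hcomm l' z) (Set.toFinite _)))
      rw [h2] at h3
      have h4 := lip_foldr Q hLip l' ((Q a)^[n] x₁) z
      rw [dist_comm] at hn
      linarith
  choose N hN1 hN using hN
  have hred : ∀ n : ℕ, ∀ l : List A, l.length = n → l.foldr (fun a z => Q a z) x₁ ∈ S →
      ∃ l' : List A, l'.length ≤ ∑ a, N a ∧
        l.foldr (fun a z => Q a z) x₁ = l'.foldr (fun a z => Q a z) x₁ := by
    intro n
    induction n using Nat.strong_induction_on with
    | _ n ih =>
      intro l hl hlS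
      by_cases hc : ∃ a, N a ≤ l.count a
      · obtain ⟨a, ha⟩ := hc
        obtain ⟨l', h1, h2⟩ := hN a l hlS ha
        obtain ⟨l'', h3, h4⟩ := ih l'.length (hl ▸ h1) l' rfl (h2 ▸ hlS)
        exact ⟨l'', h3, h2.trans h4⟩
      · push Not at hc
        refine ⟨l, ?_, rfl⟩
        have h1 : ∑ a, l.count a = l.length := by
          simpa using Multiset.sum_count_eq_card (s := Finset.univ) (m := (l : Multiset A))
            (fun a _ => Finset.mem_univ a)
        rw [← h1]
        exact Finset.sum_le_sum fun a _ => (hc a).le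
  refine ((List.finite_length_le A (∑ a, N a)).image
    (fun l => l.foldr (fun a z => Q a z) x₁)).subset ?_
  intro y hy
  obtain ⟨l, rfl⟩ := hy.1
  obtain ⟨l', h1, h2⟩ := hred _ l rfl hy
  exact ⟨l', h1, h2.symm⟩
end
end
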